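/- Let α ∈ ℕ^+, f = z(z+α). Then Ext¹ in the graded category between X = (A/(x,z+α)A)⟨−α⟩ and Y = (A/(y,z−1)A)⟨1⟩ vanishes in both directions, Ext¹_A(S,S) = 0 for S ∈ {X, Y, Z}, and Ext¹_A(X,Z) = Ext¹_A(Z,X) = Ext¹_A(Y,Z) = Ext¹_A(Z,Y) = k, concentrated in degree 0, where Z = A/(y^α,x,z)A. -/

import Mathlib

open Polynomial

noncomputable section

/-- The defining relations of the generalized Weyl algebra `A(f)` over `k[z]` with
`σ(z) = z + 1`: `xz = σ(z)x`, `yz = σ⁻¹(z)y`, `xy = f`, `yx = σ⁻¹(f)`.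
Generators: `0 ↦ x`, `1 ↦ y`, `2 ↦ z`. -/
inductive gwaRel (k : Type) [Field k] (f : Polynomial k) :
    FreeAlgebra k (Fin 3) → FreeAlgebra k (Fin 3) → Prop
  | xz : gwaRel k f (FreeAlgebra.ι k 0 * FreeAlgebra.ι k 2)
      ((FreeAlgebra.ι k 2 + 1) * FreeAlgebra.ι k 0)
  | yz : gwaRel k f (FreeAlgebra.ι k 1 * FreeAlgebra.ι k 2)
      ((FreeAlgebra.ι k 2 - 1) * FreeAlgebra.ι k 1)
  | xy : gwaRel k f (FreeAlgebra.ι k 0 * FreeAlgebra.ι k 1)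
      (aeval (FreeAlgebra.ι k 2) f)
  | yx : gwaRel k f (FreeAlgebra.ι k 1 * FreeAlgebra.ι k 0)
      (aeval (FreeAlgebra.ι k 2) (f.comp (X - 1)))

/-- The generalized Weyl algebra `A(f) = k[z]⟨x,y⟩ / (xz-σ(z)x, yz-σ⁻¹(z)y, xy-f, yx-σ⁻¹(f))`. -/
abbrev GWA (k : Type) [Field k] (f : Polynomial k) := RingQuot (gwaRel k f)

def gwaX (k : Type) [Field k] (f : Polynomial k) : GWA k f :=
  RingQuot.mkAlgHom k (gwaRel k f) (FreeAlgebra.ι k 0)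

def gwaY (k : Type) [Field k] (f : Polynomial k) : GWA k f :=
  RingQuot.mkAlgHom k (gwaRel k f) (FreeAlgebra.ι k 1)

def gwaZ (k : Type) [Field k] (f : Polynomial k) : GWA k f :=
  RingQuot.mkAlgHom k (gwaRel k f) (FreeAlgebra.ι k 2)

/-- The canonical `k[z]`-module generator of the degree-`n` component of `A(f)`:
`xⁿ` for `n ≥ 0` and `y⁻ⁿ` for `n < 0`. -/
def gwaMon (k : Type) [Field k] (f : Polynomial k) (n : ℤ) : GWA k f :=
  if 0 ≤ n then gwaX k f ^ n.toNat else gwaY k f ^ (-n).toNat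

/-- The degree-`n` component of `A(f)` (as a `k`-subspace): the left `k[z]`-span of the
canonical monomial `mₙ`. -/
def gwaComp (k : Type) [Field k] (f : Polynomial k) (n : ℤ) : Submodule k (GWA k f) :=
  Submodule.span k {w | ∃ q : Polynomial k, w = aeval (gwaZ k f) q * gwaMon k f n}

variable (k : Type) [Field k] (f : Polynomial k)

/-- The degree-`n` component of the shifted graded quotient module `(A(f)/I)⟨s⟩`:
the image of `A(f)_{n−s}` under the quotient map. -/
def qgrade (I : Submodule (GWA k f)ᵐᵒᵖ (GWA k f)) (s n : ℤ) :
    Set (GWA k f ⧸ I) :=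
  Submodule.Quotient.mk '' ((gwaComp k f (n - s) : Set (GWA k f)))

/-- `gE` is a `ℤ`-grading of the right `A(f)`-module `E`: the components are additive
subgroups, every element decomposes as a finite sum of homogeneous components, such a
decomposition is unique, and `E_n · A_i ⊆ E_{n+i}`. -/
def IsGrading (E : ModuleCat.{0} (GWA k f)ᵐᵒᵖ) (gE : ℤ → Set E) : Prop :=
  (∀ n, (0 : E) ∈ gE n) ∧
  (∀ n, ∀ a ∈ gE n, ∀ b ∈ gE n, a + b ∈ gE n) ∧
  (∀ n, ∀ a ∈ gE n, -a ∈ gE n) ∧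
  (∀ e : E, ∃ (s : Finset ℤ) (cc : ℤ → E), (∀ n, cc n ∈ gE n) ∧ e = ∑ n ∈ s, cc n) ∧
  (∀ (s : Finset ℤ) (cc : ℤ → E), (∀ n ∈ s, cc n ∈ gE n) →
    ∑ n ∈ s, cc n = 0 → ∀ n ∈ s, cc n = 0) ∧
  (∀ n i : ℤ, ∀ e ∈ gE n, ∀ a ∈ gwaComp k f i, (MulOpposite.op a) • e ∈ gE (n + i))

/-- `(E, gE, ι, π)` is a graded extension `0 → (A/I_T)⟨t+d⟩ → E → (A/I_S)⟨s⟩ → 0` in the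
category of graded right `A(f)`-modules (all maps of degree zero): here `I_T, t` define
the graded module `T = (A/I_T)⟨t⟩`, `I_S, s` define `S = (A/I_S)⟨s⟩`, and `d` is the
degree of the shift applied to `T`. -/
def IsGradedExt (IT : Submodule (GWA k f)ᵐᵒᵖ (GWA k f)) (t : ℤ)
    (IS : Submodule (GWA k f)ᵐᵒᵖ (GWA k f)) (s : ℤ) (d : ℤ)
    (E : ModuleCat.{0} (GWA k f)ᵐᵒᵖ) (gE : ℤ → Set E)
    (ι : (GWA k f ⧸ IT) →ₗ[(GWA k f)ᵐᵒᵖ] E)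
    (π : E →ₗ[(GWA k f)ᵐᵒᵖ] (GWA k f ⧸ IS)) : Prop :=
  IsGrading k f E gE ∧ Function.Injective ι ∧ Function.Surjective π ∧
  LinearMap.range ι = LinearMap.ker π ∧
  (∀ n, ι '' qgrade k f IT t (n - d) ⊆ gE n) ∧
  (∀ n, π '' gE n ⊆ qgrade k f IS s n)

/-- The graded extension splits (by a degree-zero section). -/
def GradedSplits (IS : Submodule (GWA k f)ᵐᵒᵖ (GWA k f)) (s : ℤ)
    (E : ModuleCat.{0} (GWA k f)ᵐᵒᵖ) (gE : ℤ → Set E)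
    (π : E →ₗ[(GWA k f)ᵐᵒᵖ] (GWA k f ⧸ IS)) : Prop :=
  ∃ sec : (GWA k f ⧸ IS) →ₗ[(GWA k f)ᵐᵒᵖ] E,
    π.comp sec = LinearMap.id ∧ ∀ n, sec '' qgrade k f IS s n ⊆ gE n

/-- `Ext¹_A(S, T) = 0` (as a graded vector space): every graded extension
`0 → T⟨d⟩ → E → S → 0` splits, for every degree `d`. -/
def ExtVanishes (IT : Submodule (GWA k f)ᵐᵒᵖ (GWA k f)) (t : ℤ)
    (IS : Submodule (GWA k f)ᵐᵒᵖ (GWA k f)) (s : ℤ) : Prop :=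
  ∀ (d : ℤ) (E : ModuleCat.{0} (GWA k f)ᵐᵒᵖ) (gE : ℤ → Set E)
    (ι : (GWA k f ⧸ IT) →ₗ[(GWA k f)ᵐᵒᵖ] E)
    (π : E →ₗ[(GWA k f)ᵐᵒᵖ] (GWA k f ⧸ IS)),
    IsGradedExt k f IT t IS s d E gE ι π → GradedSplits k f IS s E gE π

/-- `Ext¹_A(S, T) = k`, concentrated in degree `0` (as a graded vector space):
every graded extension `0 → T⟨d⟩ → E → S → 0` with `d ≠ 0` splits; there is a nonsplit
graded extension in degree `0`; and any two nonsplit graded extensions in degree `0`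
are equivalent up to a nonzero scalar `c ∈ k^×` (there is a degree-zero homomorphism of
extensions which is `c·id` on `T`; such extensions represent proportional classes, so
the degree-`0` component of `Ext¹` is one-dimensional). -/
def ExtOneDim (IT : Submodule (GWA k f)ᵐᵒᵖ (GWA k f)) (t : ℤ)
    (IS : Submodule (GWA k f)ᵐᵒᵖ (GWA k f)) (s : ℤ) : Prop :=
  (∀ (d : ℤ), d ≠ 0 → ∀ (E : ModuleCat.{0} (GWA k f)ᵐᵒᵖ) (gE : ℤ → Set E)
    (ι : (GWA k f ⧸ IT) →ₗ[(GWA k f)ᵐᵒᵖ] E)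
    (π : E →ₗ[(GWA k f)ᵐᵒᵖ] (GWA k f ⧸ IS)),
    IsGradedExt k f IT t IS s d E gE ι π → GradedSplits k f IS s E gE π) ∧
  (∃ (E : ModuleCat.{0} (GWA k f)ᵐᵒᵖ) (gE : ℤ → Set E)
    (ι : (GWA k f ⧸ IT) →ₗ[(GWA k f)ᵐᵒᵖ] E)
    (π : E →ₗ[(GWA k f)ᵐᵒᵖ] (GWA k f ⧸ IS)),
    IsGradedExt k f IT t IS s 0 E gE ι π ∧ ¬GradedSplits k f IS s E gE π) ∧
  (∀ (E : ModuleCat.{0} (GWA k f)ᵐᵒᵖ) (gE : ℤ → Set E)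
    (ι : (GWA k f ⧸ IT) →ₗ[(GWA k f)ᵐᵒᵖ] E)
    (π : E →ₗ[(GWA k f)ᵐᵒᵖ] (GWA k f ⧸ IS)),
    IsGradedExt k f IT t IS s 0 E gE ι π → ¬GradedSplits k f IS s E gE π →
    ∀ (E' : ModuleCat.{0} (GWA k f)ᵐᵒᵖ) (gE' : ℤ → Set E')
      (ι' : (GWA k f ⧸ IT) →ₗ[(GWA k f)ᵐᵒᵖ] E')
      (π' : E' →ₗ[(GWA k f)ᵐᵒᵖ] (GWA k f ⧸ IS)),
      IsGradedExt k f IT t IS s 0 E' gE' ι' π' → ¬GradedSplits k f IS s E' gE' π' →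
      ∃ c : k, c ≠ 0 ∧ ∃ ψ : E →ₗ[(GWA k f)ᵐᵒᵖ] E',
        (∀ w : GWA k f ⧸ IT,
          ψ (ι w) = ι' ((MulOpposite.op (algebraMap k (GWA k f) c)) • w)) ∧
        (∀ e : E, π' (ψ e) = π e) ∧
        (∀ n, ψ '' gE n ⊆ gE' n))

/-!
The element `z` acts on the degree-`n` component of each of the three simple modules as the scalar
`n`, and the roots `-α` and `0` of `f` cut `ℤ` into the sets of degrees `n ≤ -α`, `-α < n ≤ 0` and
`0 < n` in which `X`, `Z` and `Y` are one-dimensional. In general, if `P` is an interval around `s`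
cut out by integral roots of `f`, then the classes of the canonical monomials are a basis of
`(A/I)⟨s⟩`, where the right ideal `I = I(s, P)` is generated by `z - s` and the monomials of degree
outside `P`.

Given a graded extension of `(A/I(s, P))⟨s⟩` by `(A/I(t, Q))⟨t + d⟩`, lift the class of `1` to a
homogeneous element `u`. It splits the extension as soon as `u I(s, P) = 0`.
* If `d ≠ 0`, this can be achieved because `z` has different eigenvalues on the two modules in each
  degree.
* If `d = 0`, then `u` is killed by all generators of `I(s, P)` in degrees outside `Q`. If `P` and
  `Q` are separated by a gap, the remaining generators are killed because they factor through it.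
* If `d = 0` and the two modules agree, only `u (z - s)` has to vanish. Walking over the end of `P`
  at a root `r` and back is multiplication by `f(z)`, which acts there as the nilpotent part of `z`
  times `f'(r)`, and the walk is zero; as `r` is a simple root, `z` acts without nilpotent part.
* If `d = 0` and `P` and `Q` are neighbours, the only obstruction is the scalar by which the
  monomial of degree `t - s` maps `u` to the generator of the submodule. The universal case is
  `(A/I(s, P ∪ Q))⟨s⟩`, which is nonsplit because it is generated in degree `s`.
-/

section GradedAlgebra

variable {k f}

local notation "𝐱" => gwaX k f
local notation "𝐲" => gwaY k f
local notation "𝐳" => gwaZ k f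

theorem gwaX_mul_gwaZ : 𝐱 * 𝐳 = (𝐳 + 1) * 𝐱 := by
  simpa [gwaX, gwaZ] using RingQuot.mkAlgHom_rel k (gwaRel.xz (k := k) (f := f))

theorem gwaY_mul_gwaZ : 𝐲 * 𝐳 = (𝐳 - 1) * 𝐲 := by
  simpa [gwaY, gwaZ] using RingQuot.mkAlgHom_rel k (gwaRel.yz (k := k) (f := f))

theorem gwaX_mul_gwaY : 𝐱 * 𝐲 = aeval 𝐳 f := by
  have h := RingQuot.mkAlgHom_rel k (gwaRel.xy (k := k) (f := f))
  rwa [map_mul, ← aeval_algHom_apply] at h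

theorem gwaY_mul_gwaX : 𝐲 * 𝐱 = aeval 𝐳 (f.comp (X - 1)) := by
  have h := RingQuot.mkAlgHom_rel k (gwaRel.yx (k := k) (f := f))
  rwa [map_mul, ← aeval_algHom_apply] at h

theorem gwa_induction {p : GWA k f → Prop} (algebraMap : ∀ c : k, p (algebraMap k _ c))
    (gwaX : p 𝐱) (gwaY : p 𝐲) (gwaZ : p 𝐳) (mul : ∀ a b, p a → p b → p (a * b))
    (add : ∀ a b, p a → p b → p (a + b)) (a : GWA k f) : p a := by
  obtain ⟨a, rfl⟩ := RingQuot.mkAlgHom_surjective k (gwaRel k f) a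
  induction a with
  | grade0 c => simpa using algebraMap c
  | grade1 i => fin_cases i <;> assumption
  | mul a b ha hb => simpa using mul _ _ ha hb
  | add a b ha hb => simpa using add _ _ ha hb

theorem gwaMon_natCast (n : ℕ) : gwaMon k f n = 𝐱 ^ n := by
  simp [gwaMon]

theorem gwaMon_neg_natCast (n : ℕ) : gwaMon k f (-n) = 𝐲 ^ n := by
  rcases n.eq_zero_or_pos with rfl | hn
  · simp [gwaMon]
  · rw [gwaMon, if_neg (by lia)]
    simp

theorem gwaMon_zero : gwaMon k f 0 = 1 := by
  simpa using gwaMon_natCast (k := k) (f := f) 0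

theorem gwaMon_one : gwaMon k f 1 = 𝐱 := by
  simpa using gwaMon_natCast (k := k) (f := f) 1

theorem gwaMon_neg_one : gwaMon k f (-1) = 𝐲 := by
  simpa using gwaMon_neg_natCast (k := k) (f := f) 1

theorem gwaMon_add_of_nonneg {m n : ℤ} (hm : 0 ≤ m) (hn : 0 ≤ n) :
    gwaMon k f (m + n) = gwaMon k f m * gwaMon k f n := by
  lift m to ℕ using hm
  lift n to ℕ using hn
  rw [← Nat.cast_add, gwaMon_natCast, gwaMon_natCast, gwaMon_natCast, pow_add]

theorem gwaMon_add_of_nonpos {m n : ℤ} (hm : m ≤ 0) (hn : n ≤ 0) :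
    gwaMon k f (m + n) = gwaMon k f m * gwaMon k f n := by
  obtain ⟨m, rfl⟩ := Int.exists_eq_neg_ofNat hm
  obtain ⟨n, rfl⟩ := Int.exists_eq_neg_ofNat hn
  rw [← neg_add, ← Nat.cast_add, gwaMon_neg_natCast, gwaMon_neg_natCast, gwaMon_neg_natCast,
    pow_add]

theorem gwaMon_sub_mul_gwaMon_sub {l m n : ℤ} (hm : m ∈ Set.uIcc l n) :
    gwaMon k f (m - l) * gwaMon k f (n - m) = gwaMon k f (n - l) := by
  rw [← sub_add_sub_cancel' m l n]
  rcases Set.mem_uIcc.1 hm with ⟨h, h'⟩ | ⟨h, h'⟩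
  · exact (gwaMon_add_of_nonneg (by lia) (by lia)).symm
  · exact (gwaMon_add_of_nonpos (by lia) (by lia)).symm

theorem gwaMon_add_one {n : ℤ} (hn : 0 ≤ n) : gwaMon k f (n + 1) = gwaMon k f n * 𝐱 := by
  rw [gwaMon_add_of_nonneg hn zero_le_one, gwaMon_one]

theorem gwaMon_sub_one {n : ℤ} (hn : n ≤ 0) : gwaMon k f (n - 1) = gwaMon k f n * 𝐲 := by
  rw [sub_eq_add_neg, gwaMon_add_of_nonpos hn (by simp), gwaMon_neg_one]

theorem gwaMon_mul_gwaZ (n : ℤ) : gwaMon k f n * 𝐳 = (𝐳 + n) * gwaMon k f n := by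
  induction n with
  | zero => simp [gwaMon_zero]
  | succ n ih =>
    rw [gwaMon_add_one (by simp), mul_assoc, gwaX_mul_gwaZ, ← mul_assoc, mul_add, ih, mul_one,
      ← add_one_mul, mul_assoc, Int.cast_add, Int.cast_one, add_assoc]
  | pred n ih =>
    rw [gwaMon_sub_one (by simp), mul_assoc, gwaY_mul_gwaZ, ← mul_assoc, mul_sub, ih, mul_one,
      ← sub_one_mul, mul_assoc, Int.cast_sub, Int.cast_one, add_sub_assoc]

theorem mem_gwaComp {n : ℤ} {a : GWA k f} :
    a ∈ gwaComp k f n ↔ ∃ p : k[X], aeval 𝐳 p * gwaMon k f n = a := by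
  refine ⟨fun h => ?_, fun ⟨p, hp⟩ => Submodule.subset_span ⟨p, hp.symm⟩⟩
  induction h using Submodule.span_induction with
  | mem x hx => exact hx.imp fun p hp => hp.symm
  | zero => exact ⟨0, by simp⟩
  | add _ _ _ _ hx hy =>
    obtain ⟨p, rfl⟩ := hx
    obtain ⟨q, rfl⟩ := hy
    exact ⟨p + q, by simp [add_mul]⟩
  | smul c _ _ hx =>
    obtain ⟨p, rfl⟩ := hx
    exact ⟨c • p, by simp⟩

theorem aeval_mul_mem_gwaComp (p : k[X]) {n : ℤ} {a : GWA k f} (ha : a ∈ gwaComp k f n) :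
    aeval 𝐳 p * a ∈ gwaComp k f n := by
  obtain ⟨q, rfl⟩ := mem_gwaComp.1 ha
  exact mem_gwaComp.2 ⟨p * q, by rw [map_mul, mul_assoc]⟩

theorem gwaMon_mem_gwaComp (n : ℤ) : gwaMon k f n ∈ gwaComp k f n :=
  mem_gwaComp.2 ⟨1, by simp⟩

theorem mul_gwaZ_of_mem_gwaComp {n : ℤ} {a : GWA k f} (ha : a ∈ gwaComp k f n) :
    a * 𝐳 = (𝐳 + n) * a := by
  obtain ⟨p, rfl⟩ := mem_gwaComp.1 ha
  have hp : aeval 𝐳 p * (𝐳 + n) = (𝐳 + n) * aeval 𝐳 p := by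
    have hz : 𝐳 + n = aeval 𝐳 (X + (n : k[X])) := by simp
    rw [hz, ← map_mul, ← map_mul, mul_comm]
  rw [mul_assoc, gwaMon_mul_gwaZ, ← mul_assoc, hp, mul_assoc]

theorem mul_aeval_of_mem_gwaComp {n : ℤ} {a : GWA k f} (ha : a ∈ gwaComp k f n) (p : k[X]) :
    a * aeval 𝐳 p = aeval 𝐳 (p.comp (X + (n : k[X]))) * a := by
  induction p using Polynomial.induction_on' with
  | add p q hp hq => simp only [map_add, mul_add, add_mul, add_comp, hp, hq]
  | monomial m c =>
    have hm : a * 𝐳 ^ m = (𝐳 + n) ^ m * a :=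
      SemiconjBy.pow_right (mul_gwaZ_of_mem_gwaComp ha) m
    rw [aeval_monomial, monomial_comp, map_mul, aeval_C, map_pow, map_add, aeval_X, map_intCast,
      mul_assoc, ← hm, ← mul_assoc, ← Algebra.commutes, mul_assoc]

theorem aeval_mul_of_mem_gwaComp {n : ℤ} {a : GWA k f} (ha : a ∈ gwaComp k f n) (p : k[X]) :
    aeval 𝐳 p * a = a * aeval 𝐳 (p.comp (X - (n : k[X]))) := by
  have hX : (X - (n : k[X])).comp (X + (n : k[X])) = X := by simp
  rw [mul_aeval_of_mem_gwaComp ha, comp_assoc, hX, comp_X]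

theorem mul_gwaX_mem_gwaComp {n : ℤ} {a : GWA k f} (ha : a ∈ gwaComp k f n) :
    a * 𝐱 ∈ gwaComp k f (n + 1) := by
  obtain ⟨p, rfl⟩ := mem_gwaComp.1 ha
  rw [mul_assoc]
  refine aeval_mul_mem_gwaComp p ?_
  rcases le_or_gt 0 n with hn | hn
  · exact gwaMon_add_one (k := k) (f := f) hn ▸ gwaMon_mem_gwaComp _
  · obtain ⟨n, rfl⟩ : ∃ m, n = m - 1 := ⟨n + 1, by ring⟩
    rw [gwaMon_sub_one (by lia), mul_assoc, gwaY_mul_gwaX,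
      mul_aeval_of_mem_gwaComp (gwaMon_mem_gwaComp _), sub_add_cancel]
    exact aeval_mul_mem_gwaComp _ (gwaMon_mem_gwaComp n)

theorem mul_gwaY_mem_gwaComp {n : ℤ} {a : GWA k f} (ha : a ∈ gwaComp k f n) :
    a * 𝐲 ∈ gwaComp k f (n - 1) := by
  obtain ⟨p, rfl⟩ := mem_gwaComp.1 ha
  rw [mul_assoc]
  refine aeval_mul_mem_gwaComp p ?_
  rcases le_or_gt n 0 with hn | hn
  · exact gwaMon_sub_one (k := k) (f := f) hn ▸ gwaMon_mem_gwaComp _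
  · obtain ⟨n, rfl⟩ : ∃ m, n = m + 1 := ⟨n - 1, by ring⟩
    rw [gwaMon_add_one (by lia), mul_assoc, gwaX_mul_gwaY,
      mul_aeval_of_mem_gwaComp (gwaMon_mem_gwaComp _), add_sub_cancel_right]
    exact aeval_mul_mem_gwaComp _ (gwaMon_mem_gwaComp n)

theorem mul_gwaMon_mem_gwaComp {m : ℤ} {a : GWA k f} (ha : a ∈ gwaComp k f m) (n : ℤ) :
    a * gwaMon k f n ∈ gwaComp k f (m + n) := by
  induction n with
  | zero => simpa [gwaMon_zero] using ha
  | succ n ih =>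
    rw [gwaMon_add_one (by simp), ← mul_assoc, ← add_assoc]
    exact mul_gwaX_mem_gwaComp ih
  | pred n ih =>
    rw [gwaMon_sub_one (by simp), ← mul_assoc, ← add_sub_assoc]
    exact mul_gwaY_mem_gwaComp ih

instance gwaComp_gradedMonoid : SetLike.GradedMonoid (gwaComp k f) where
  one_mem := gwaMon_zero (k := k) (f := f) ▸ gwaMon_mem_gwaComp 0
  mul_mem m n a b ha hb := by
    obtain ⟨p, rfl⟩ := mem_gwaComp.1 hb
    rw [← mul_assoc, mul_aeval_of_mem_gwaComp ha]
    exact mul_gwaMon_mem_gwaComp (aeval_mul_mem_gwaComp _ ha) n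

theorem aeval_mem_gwaComp (p : k[X]) : aeval 𝐳 p ∈ gwaComp k f 0 := by
  simpa using aeval_mul_mem_gwaComp p (SetLike.one_mem_graded (gwaComp k f))

theorem algebraMap_mem_gwaComp (c : k) : algebraMap k (GWA k f) c ∈ gwaComp k f 0 := by
  simpa using aeval_mem_gwaComp (k := k) (f := f) (C c)

theorem gwaZ_sub_mem_gwaComp (s : ℤ) : 𝐳 - s ∈ gwaComp k f 0 := by
  have h := aeval_mem_gwaComp (k := k) (f := f) (X - (s : k[X]))
  rwa [map_sub, aeval_X, map_intCast] at h

theorem iSup_gwaComp : ⨆ n, gwaComp k f n = ⊤ := by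
  rw [eq_top_iff]
  rintro a -
  have hmem {n : ℤ} {b : GWA k f} (hb : b ∈ gwaComp k f n) :
      b ∈ (DirectSum.coeAlgHom (gwaComp k f)).range := by
    rw [← Subalgebra.mem_toSubmodule, ← Submodule.iSup_eq_toSubmodule_range]
    exact Submodule.mem_iSup_of_mem n hb
  rw [Submodule.iSup_eq_toSubmodule_range, Subalgebra.mem_toSubmodule]
  induction a using gwa_induction with
  | algebraMap c => exact hmem (algebraMap_mem_gwaComp c)
  | gwaX => exact hmem (gwaMon_one (k := k) (f := f) ▸ gwaMon_mem_gwaComp 1)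
  | gwaY => exact hmem (gwaMon_neg_one (k := k) (f := f) ▸ gwaMon_mem_gwaComp (-1))
  | gwaZ => simpa using hmem (aeval_mem_gwaComp X)
  | mul a b ha hb => exact mul_mem ha hb
  | add a b ha hb => exact add_mem ha hb

theorem exists_sum_mem_gwaComp (a : GWA k f) :
    ∃ (σ : Finset ℤ) (c : ℤ → GWA k f), (∀ n, c n ∈ gwaComp k f n) ∧ ∑ n ∈ σ, c n = a := by
  obtain ⟨c, hc, hsum⟩ := (Submodule.mem_iSup_iff_exists_finsupp (gwaComp k f) a).1
    (iSup_gwaComp (k := k) (f := f) ▸ Submodule.mem_top)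
  exact ⟨c.support, c, hc, hsum⟩

end GradedAlgebra

section WeightModules

open MulOpposite (op unop)

local notation "𝐱" => gwaX k f
local notation "𝐲" => gwaY k f
local notation "𝐳" => gwaZ k f

/-- The coefficient by which `x` maps the generator of weight `n` of `A/(z-s)A` to the one of
weight `n + 1`, where the generator of weight `n` is the class of `gwaMon k f (n - s)`. -/
def upCoeff (s n : ℤ) : k := if s ≤ n then 1 else f.eval (n : k)

/-- The coefficient by which `y` maps the generator of weight `n` of `A/(z-s)A` to the one of
weight `n - 1`, where the generator of weight `n` is the class of `gwaMon k f (n - s)`. -/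
def downCoeff (s n : ℤ) : k := if n ≤ s then 1 else f.eval ((n - 1 : ℤ) : k)

variable {k f}

theorem upCoeff_mul_downCoeff (s n : ℤ) :
    upCoeff k f s n * downCoeff k f s (n + 1) = f.eval (n : k) := by
  rcases le_or_gt s n with h | h
  · rw [upCoeff, downCoeff, if_pos h, if_neg (by lia), one_mul, add_sub_cancel_right]
  · rw [upCoeff, downCoeff, if_neg (by lia), if_pos (by lia), mul_one]

/-- The endomorphism sending the `n`-th unit vector to `a n` times the `(n + i)`-th one. -/
def weightedShift (a : ℤ → k) (i : ℤ) : Module.End k (ℤ → k) where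
  toFun v n := a (n - i) * v (n - i)
  map_add' v w := by ext n; simp [mul_add]
  map_smul' c v := by ext n; simp [mul_left_comm]

theorem weightedShift_apply (a : ℤ → k) (i : ℤ) (v : ℤ → k) (n : ℤ) :
    weightedShift a i v n = a (n - i) * v (n - i) := rfl

theorem unop_aeval_weightedShift_zero (a : ℤ → k) (p : k[X]) (v : ℤ → k) (n : ℤ) :
    (aeval (op (weightedShift a 0)) p).unop v n = p.eval (a n) * v n := by
  induction p using Polynomial.induction_on' generalizing v with
  | add p q hp hq => simp [add_mul, hp, hq]
  | monomial m c =>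
    induction m generalizing v with
    | zero => simp
    | succ m ih =>
      rw [← monomial_mul_X, map_mul, aeval_X, MulOpposite.unop_mul, Module.End.mul_apply,
        MulOpposite.unop_op, weightedShift_apply, sub_zero, ih, eval_mul, eval_X]
      ring

variable (k f) in
/-- The right `A(f)`-module `A/(z-s)A` (completed to all functions `ℤ → k`), in the basis of
classes of `gwaMon k f (n - s)`, indexed by the weight `n`. -/
def weightRep (s : ℤ) : GWA k f →ₐ[k] (Module.End k (ℤ → k))ᵐᵒᵖ :=
  RingQuot.liftAlgHom k
    ⟨FreeAlgebra.lift k ![op (weightedShift (upCoeff k f s) 1),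
      op (weightedShift (downCoeff k f s) (-1)), op (weightedShift (fun n => (n : k)) 0)], by
      rintro _ _ (_ | _ | _ | _) <;>
        refine MulOpposite.unop_injective (LinearMap.ext fun v => funext fun n => ?_) <;>
        simp only [map_mul, map_add, map_sub, map_one, ← aeval_algHom_apply,
          FreeAlgebra.lift_ι_apply, Matrix.cons_val, MulOpposite.unop_mul, MulOpposite.unop_add,
          MulOpposite.unop_sub, MulOpposite.unop_one, MulOpposite.unop_op, Module.End.mul_apply,
          LinearMap.add_apply, LinearMap.sub_apply, Module.End.one_apply, Pi.add_apply,
          Pi.sub_apply, weightedShift_apply, unop_aeval_weightedShift_zero, sub_zero,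
          sub_neg_eq_add, add_sub_cancel_right, sub_add_cancel]
      · push_cast
        ring
      · push_cast
        ring
      · rw [← upCoeff_mul_downCoeff s n]
        ring
      · have h := upCoeff_mul_downCoeff (k := k) (f := f) s (n - 1)
        rw [sub_add_cancel, Int.cast_sub, Int.cast_one] at h
        rw [eval_comp, eval_sub, eval_X, eval_one, ← h]
        ring⟩

theorem weightRep_gwaX (s : ℤ) :
    weightRep k f s 𝐱 = op (weightedShift (upCoeff k f s) 1) :=
  (RingQuot.liftAlgHom_mkAlgHom_apply ..).trans (FreeAlgebra.lift_ι_apply ..)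

theorem weightRep_gwaY (s : ℤ) :
    weightRep k f s 𝐲 = op (weightedShift (downCoeff k f s) (-1)) :=
  (RingQuot.liftAlgHom_mkAlgHom_apply ..).trans (FreeAlgebra.lift_ι_apply ..)

theorem weightRep_aeval (s : ℤ) (p : k[X]) :
    weightRep k f s (aeval 𝐳 p) = aeval (op (weightedShift (fun n : ℤ => (n : k)) 0)) p := by
  have hz : weightRep k f s 𝐳 = op (weightedShift (fun n : ℤ => (n : k)) 0) :=
    (RingQuot.liftAlgHom_mkAlgHom_apply ..).trans (FreeAlgebra.lift_ι_apply ..)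
  rw [← aeval_algHom_apply, hz]

/-- The coordinates of the class of an element in `A/(z-s)A`, see `weightRep`. -/
def weightCoord (s : ℤ) : GWA k f →ₗ[k] ℤ → k where
  toFun a := (weightRep k f s a).unop (Pi.single s 1)
  map_add' a b := by simp
  map_smul' c a := by simp

theorem weightCoord_mul (s : ℤ) (a b : GWA k f) :
    weightCoord s (a * b) = (weightRep k f s b).unop (weightCoord s a) := by
  simp [weightCoord]

theorem weightCoord_mul_gwaX (s n : ℤ) (a : GWA k f) :
    weightCoord s (a * 𝐱) n = upCoeff k f s (n - 1) * weightCoord s a (n - 1) := by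
  rw [weightCoord_mul, weightRep_gwaX, MulOpposite.unop_op, weightedShift_apply]

theorem weightCoord_mul_gwaY (s n : ℤ) (a : GWA k f) :
    weightCoord s (a * 𝐲) n = downCoeff k f s (n + 1) * weightCoord s a (n + 1) := by
  rw [weightCoord_mul, weightRep_gwaY, MulOpposite.unop_op, weightedShift_apply, sub_neg_eq_add]

theorem weightCoord_mul_aeval (s n : ℤ) (a : GWA k f) (p : k[X]) :
    weightCoord s (a * aeval 𝐳 p) n = p.eval (n : k) * weightCoord s a n := by
  rw [weightCoord_mul, weightRep_aeval, unop_aeval_weightedShift_zero]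

theorem weightCoord_one (s : ℤ) : weightCoord s (1 : GWA k f) = Pi.single s 1 := by
  simp [weightCoord]

theorem weightCoord_aeval_mul (s : ℤ) (p : k[X]) (a : GWA k f) :
    weightCoord s (aeval 𝐳 p * a) = p.eval (s : k) • weightCoord s a := by
  have hp : weightCoord s (aeval 𝐳 p : GWA k f) = p.eval (s : k) • Pi.single s 1 := by
    ext n
    rw [← one_mul (aeval 𝐳 p), weightCoord_mul_aeval, weightCoord_one]
    by_cases hn : n = s <;> simp [hn]
  rw [weightCoord_mul, hp, map_smul, ← weightCoord_one (f := f), ← weightCoord_mul, one_mul]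

theorem weightCoord_gwaMon (s m : ℤ) :
    weightCoord s (gwaMon k f m) = Pi.single (s + m) 1 := by
  ext n
  induction m generalizing n with
  | zero => rw [gwaMon_zero, weightCoord_one, add_zero]
  | succ m ih =>
    rw [gwaMon_add_one (by simp), weightCoord_mul_gwaX, ih, ← add_assoc]
    by_cases hn : n = s + m + 1
    · simp [hn, upCoeff]
    · simp [hn, sub_eq_iff_eq_add]
  | pred m ih =>
    rw [gwaMon_sub_one (by simp), weightCoord_mul_gwaY, ih, ← add_sub_assoc]
    by_cases hn : n = s + -m - 1
    · simp [hn, downCoeff]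
    · simp [hn, ← eq_sub_iff_add_eq]

theorem weightCoord_eq_zero_of_mem_gwaComp {m : ℤ} {a : GWA k f} (ha : a ∈ gwaComp k f m)
    {s n : ℤ} (hn : n ≠ s + m) : weightCoord s a n = 0 := by
  obtain ⟨p, rfl⟩ := mem_gwaComp.1 ha
  simp [weightCoord_aeval_mul, weightCoord_gwaMon, hn]

theorem weightCoord_mul_aeval_mul {s t : ℤ} {h : GWA k f} (hh : h ∈ gwaComp k f (t - s))
    (p : k[X]) (a : GWA k f) :
    weightCoord s (h * (aeval 𝐳 p * a)) = p.eval (t : k) • weightCoord s (h * a) := by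
  rw [← mul_assoc, mul_aeval_of_mem_gwaComp hh, mul_assoc, weightCoord_aeval_mul]
  simp

theorem weightCoord_mul_of_mem_gwaComp {s t : ℤ} {h : GWA k f} (hh : h ∈ gwaComp k f (t - s))
    (a : GWA k f) (n : ℤ) :
    weightCoord s (h * a) n = weightCoord s (h * gwaMon k f (n - t)) n * weightCoord t a n := by
  obtain ⟨σ, c, hc, rfl⟩ := exists_sum_mem_gwaComp a
  simp only [Finset.mul_sum, map_sum, Finset.sum_apply]
  refine Finset.sum_congr rfl fun m _ => ?_
  obtain ⟨p, hp⟩ := mem_gwaComp.1 (hc m)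
  rw [← hp, weightCoord_mul_aeval_mul hh, weightCoord_aeval_mul, weightCoord_gwaMon]
  obtain rfl | hn := eq_or_ne n (t + m)
  · simp [mul_comm]
  · have := weightCoord_eq_zero_of_mem_gwaComp (mul_gwaMon_mem_gwaComp hh m) (s := s) (n := n)
      (by lia)
    simp [hn, this]

theorem weightCoord_sum_apply {s t : ℤ} {σ : Finset ℤ} {c : ℤ → GWA k f}
    (hc : ∀ i ∈ σ, c i ∈ gwaComp k f (i - t)) {i : ℤ} (hi : i ∈ σ) {n : ℤ} (hn : n = s + (i - t)) :
    weightCoord s (∑ j ∈ σ, c j) n = weightCoord s (c i) n := by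
  rw [map_sum, Finset.sum_apply]
  refine Finset.sum_eq_single_of_mem i hi fun j hj hji =>
    weightCoord_eq_zero_of_mem_gwaComp (hc j hj) (by lia)

end WeightModules

section WeightIdeals

local notation "𝐳" => gwaZ k f

/-- `P` is the set of weights of a graded quotient of `A/(z-s)A` by a right ideal: an interval
around `s`, each of whose ends is infinite or lies at an integral root of `f`. -/
structure IsWeightInterval (s : ℤ) (P : Set ℤ) : Prop where
  mem : s ∈ P
  ordConnected : P.OrdConnected
  eval_eq_zero : ∀ r : ℤ, ¬(r ∈ P ↔ r + 1 ∈ P) → f.eval (r : k) = 0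

/-- The right ideal generated by `z - s` and the canonical monomials of weight `n ∉ P`. For
suitable `P`, the quotient `(A/I)⟨s⟩` has a one-dimensional component in each degree `n ∈ P`, on
which `z` acts as `n`, and vanishes in all other degrees. -/
def weightIdeal (s : ℤ) (P : Set ℤ) : Submodule (GWA k f)ᵐᵒᵖ (GWA k f) :=
  Submodule.span _ (insert (𝐳 - s) ((fun n => gwaMon k f (n - s)) '' Pᶜ))

variable {k f} {s t : ℤ} {P Q : Set ℤ}

theorem IsWeightInterval.union (hP : IsWeightInterval k f s P) (hQ : IsWeightInterval k f t Q)
    (hPQ : (P ∪ Q).OrdConnected) : IsWeightInterval k f s (P ∪ Q) where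
  mem := Or.inl hP.mem
  ordConnected := hPQ
  eval_eq_zero r hr := by
    by_cases h : r ∈ P ↔ r + 1 ∈ P
    · exact hQ.eval_eq_zero r fun h' => hr (or_congr h h')
    · exact hP.eval_eq_zero r h

theorem gwaZ_sub_mem_weightIdeal : 𝐳 - s ∈ weightIdeal k f s P :=
  Submodule.subset_span (Set.mem_insert _ _)

theorem gwaMon_mem_weightIdeal {n : ℤ} (hn : n ∉ P) :
    gwaMon k f (n - s) ∈ weightIdeal k f s P :=
  Submodule.subset_span (Set.mem_insert_of_mem _ ⟨n, hn, rfl⟩)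

theorem mul_mem_weightIdeal {a : GWA k f} (ha : a ∈ weightIdeal k f s P) (b : GWA k f) :
    a * b ∈ weightIdeal k f s P :=
  (weightIdeal k f s P).smul_mem (MulOpposite.op b) ha

theorem weightIdeal_le {I : Submodule (GWA k f)ᵐᵒᵖ (GWA k f)} (hz : 𝐳 - s ∈ I)
    (hI : ∀ n ∉ P, gwaMon k f (n - s) ∈ I) : weightIdeal k f s P ≤ I := by
  refine Submodule.span_le.2 (Set.insert_subset hz ?_)
  rintro _ ⟨n, hn, rfl⟩
  exact hI n hn

theorem weightIdeal_anti (hPQ : P ⊆ Q) : weightIdeal k f s Q ≤ weightIdeal k f s P :=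
  weightIdeal_le gwaZ_sub_mem_weightIdeal fun _ hn => gwaMon_mem_weightIdeal fun h => hn (hPQ h)

theorem IsWeightInterval.upCoeff_eq_zero (hP : IsWeightInterval k f s P) {n : ℤ} (hn : n ∉ P)
    (hn' : n + 1 ∈ P) : upCoeff k f s n = 0 := by
  have hs : ¬s ≤ n := fun h => hn (hP.ordConnected.out hP.mem hn' ⟨h, by lia⟩)
  rw [upCoeff, if_neg hs, hP.eval_eq_zero n fun h => hn (h.2 hn')]

theorem IsWeightInterval.downCoeff_eq_zero (hP : IsWeightInterval k f s P) {n : ℤ} (hn : n ∈ P)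
    (hn' : n + 1 ∉ P) : downCoeff k f s (n + 1) = 0 := by
  have hs : ¬n + 1 ≤ s := fun h => hn' (hP.ordConnected.out hn hP.mem ⟨by lia, h⟩)
  rw [downCoeff, if_neg hs, add_sub_cancel_right, hP.eval_eq_zero n fun h => hn' (h.1 hn)]

theorem IsWeightInterval.weightCoord_mul_eq_zero (hP : IsWeightInterval k f s P) {a : GWA k f}
    (ha : ∀ n ∈ P, weightCoord s a n = 0) (b : GWA k f) :
    ∀ n ∈ P, weightCoord s (a * b) n = 0 := by
  induction b using gwa_induction generalizing a with
  | algebraMap c =>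
    intro n hn
    simp [← Algebra.commutes, ← Algebra.smul_def, ha n hn]
  | gwaX =>
    intro n hn
    rw [weightCoord_mul_gwaX]
    by_cases h : n - 1 ∈ P
    · rw [ha _ h, mul_zero]
    · rw [hP.upCoeff_eq_zero h (by simpa), zero_mul]
  | gwaY =>
    intro n hn
    rw [weightCoord_mul_gwaY]
    by_cases h : n + 1 ∈ P
    · rw [ha _ h, mul_zero]
    · rw [hP.downCoeff_eq_zero hn h, zero_mul]
  | gwaZ =>
    intro n hn
    rw [← aeval_X (R := k) 𝐳, weightCoord_mul_aeval, ha n hn, mul_zero]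
  | mul b c hb hc =>
    rw [← mul_assoc]
    exact hc (hb ha)
  | add b c hb hc =>
    intro n hn
    rw [mul_add, map_add, Pi.add_apply, hb ha n hn, hc ha n hn, add_zero]

theorem aeval_mul_mem_weightIdeal {p : k[X]} (hp : p.eval (s : k) = 0) (a : GWA k f) :
    aeval 𝐳 p * a ∈ weightIdeal k f s P := by
  obtain ⟨q, rfl⟩ := dvd_iff_isRoot.2 hp
  rw [map_mul, mul_assoc]
  refine mul_mem_weightIdeal ?_ _
  simpa only [map_sub, aeval_X, map_intCast] using gwaZ_sub_mem_weightIdeal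

theorem mem_weightIdeal_of_mem_gwaComp {m : ℤ} {a : GWA k f} (ha : a ∈ gwaComp k f m)
    (h : s + m ∈ P → weightCoord s a (s + m) = 0) : a ∈ weightIdeal k f s P := by
  obtain ⟨p, rfl⟩ := mem_gwaComp.1 ha
  by_cases hm : s + m ∈ P
  · refine aeval_mul_mem_weightIdeal ?_ _
    simpa [weightCoord_aeval_mul, weightCoord_gwaMon] using h hm
  · rw [aeval_mul_of_mem_gwaComp (gwaMon_mem_gwaComp _)]
    refine mul_mem_weightIdeal ?_ _
    simpa using gwaMon_mem_weightIdeal (k := k) (f := f) (s := s) hm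

theorem IsWeightInterval.mem_weightIdeal_iff (hP : IsWeightInterval k f s P) {a : GWA k f} :
    a ∈ weightIdeal k f s P ↔ ∀ n ∈ P, weightCoord s a n = 0 := by
  constructor
  · intro ha
    induction ha using Submodule.span_induction with
    | mem a ha =>
      intro n hn
      rcases ha with rfl | ⟨m, hm, rfl⟩
      · have := weightCoord_aeval_mul (f := f) s (X - (s : k[X])) 1
        rw [mul_one, map_sub, aeval_X, map_intCast] at this
        simp [this]
      · have hmn : n ≠ m := by rintro rfl; exact hm hn
        rw [weightCoord_gwaMon, add_sub_cancel, Pi.single_eq_of_ne hmn]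
    | zero => simp
    | add a b _ _ ha hb => intro n hn; simp [ha n hn, hb n hn]
    | smul b a _ ha => exact hP.weightCoord_mul_eq_zero ha b.unop
  · intro h
    obtain ⟨σ, c, hc, rfl⟩ := exists_sum_mem_gwaComp a
    refine Submodule.sum_mem _ fun i hi => mem_weightIdeal_of_mem_gwaComp (hc i) fun his => ?_
    rw [← h _ his, weightCoord_sum_apply (t := 0) (by simpa using fun i _ => hc i) hi (by simp)]

theorem IsWeightInterval.mem_weightIdeal_of_sum_mem (hP : IsWeightInterval k f s P)
    {σ : Finset ℤ} {c : ℤ → GWA k f} (hc : ∀ i ∈ σ, c i ∈ gwaComp k f (i - t))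
    (hsum : ∑ i ∈ σ, c i ∈ weightIdeal k f s P) {i : ℤ} (hi : i ∈ σ) :
    c i ∈ weightIdeal k f s P := by
  refine mem_weightIdeal_of_mem_gwaComp (hc i hi) fun his => ?_
  rw [← weightCoord_sum_apply hc hi rfl]
  exact hP.mem_weightIdeal_iff.1 hsum _ his

theorem weightCoord_gwaMon_mul_gwaMon_ne_zero (hQ : Q.OrdConnected)
    (hf : ∀ r : ℤ, r ∈ Q → r + 1 ∈ Q → f.eval (r : k) ≠ 0) (ht : t ∈ Q) {n : ℤ} (hn : n ∈ Q) :
    weightCoord s (gwaMon k f (t - s) * gwaMon k f (n - t)) n ≠ 0 := by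
  obtain ⟨m, rfl⟩ : ∃ m, n = t + m := ⟨n - t, by ring⟩
  rw [add_sub_cancel_left]
  induction m with
  | zero => simp [gwaMon_zero, weightCoord_gwaMon]
  | succ m ih =>
    have hm : t + m ∈ Q := hQ.out ht hn ⟨by lia, by lia⟩
    rw [gwaMon_add_one (by simp), ← mul_assoc, weightCoord_mul_gwaX, ← add_assoc,
      add_sub_cancel_right]
    refine mul_ne_zero ?_ (ih hm)
    rw [upCoeff]
    split_ifs
    exacts [one_ne_zero, hf _ hm (by rwa [add_assoc])]
  | pred m ih =>
    have hm : t + -m ∈ Q := hQ.out hn ht ⟨by lia, by lia⟩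
    rw [gwaMon_sub_one (by simp), ← mul_assoc, weightCoord_mul_gwaY, ← add_sub_assoc,
      sub_add_cancel]
    refine mul_ne_zero ?_ (ih hm)
    rw [downCoeff]
    split_ifs
    exacts [one_ne_zero, hf _ (by rwa [add_sub_assoc]) (by simpa using hm)]

end WeightIdeals

section Gradings

open scoped RightActions

local notation "𝐳" => gwaZ k f

/-- The map `a ↦ m <• a` from a ring to a right module over it. -/
def orbitMap {R M : Type*} [Semiring R] [AddCommMonoid M] [Module Rᵐᵒᵖ M] (m : M) :
    R →ₗ[Rᵐᵒᵖ] M where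
  toFun a := m <• a
  map_add' _ _ := add_smul _ _ m
  map_smul' r _ := mul_smul r _ m

theorem orbitMap_apply {R M : Type*} [Semiring R] [AddCommMonoid M] [Module Rᵐᵒᵖ M] (m : M)
    (a : R) : orbitMap m a = m <• a := rfl

theorem map_smul_eq_mk {R M : Type*} [Ring R] [AddCommGroup M] [Module Rᵐᵒᵖ M]
    {I : Submodule Rᵐᵒᵖ R} {π : M →ₗ[Rᵐᵒᵖ] R ⧸ I} {u : M}
    (hπu : π u = Submodule.Quotient.mk 1) (a : R) : π (u <• a) = Submodule.Quotient.mk a := by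
  rw [map_smul, hπu, ← Submodule.Quotient.mk_smul, op_smul_eq_mul, one_mul]

variable {k f} {s t : ℤ} {P Q : Set ℤ}

namespace IsGrading

variable {E E' : ModuleCat.{0} (GWA k f)ᵐᵒᵖ} {gE : ℤ → Set E} {gE' : ℤ → Set E'}

theorem zero_mem (h : IsGrading k f E gE) (n : ℤ) : 0 ∈ gE n := h.1 n

theorem add_mem (h : IsGrading k f E gE) {n : ℤ} {a b : E} (ha : a ∈ gE n) (hb : b ∈ gE n) :
    a + b ∈ gE n := h.2.1 n a ha b hb

theorem sub_mem (h : IsGrading k f E gE) {n : ℤ} {a b : E} (ha : a ∈ gE n) (hb : b ∈ gE n) :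
    a - b ∈ gE n :=
  sub_eq_add_neg a b ▸ h.add_mem ha (h.2.2.1 n b hb)

theorem smul_mem (h : IsGrading k f E gE) {n i : ℤ} {e : E} (he : e ∈ gE n) {a : GWA k f}
    (ha : a ∈ gwaComp k f i) : e <• a ∈ gE (n + i) :=
  h.2.2.2.2.2 n i e he a ha

theorem exists_sum (h : IsGrading k f E gE) (e : E) :
    ∃ (σ : Finset ℤ) (c : ℤ → E), (∀ n, c n ∈ gE n) ∧ e = ∑ n ∈ σ, c n := h.2.2.2.1 e

theorem eq_of_sum_eq (h : IsGrading k f E gE) {σ : Finset ℤ} {c : ℤ → E}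
    (hc : ∀ n, c n ∈ gE n) {m : ℤ} {e : E} (he : e ∈ gE m) (hs : ∑ n ∈ σ, c n = e) :
    e = if m ∈ σ then c m else 0 := by
  let c' : ℤ → E := fun n => (if n ∈ σ then c n else 0) - if n = m then e else 0
  have hc' (n : ℤ) : c' n ∈ gE n := by
    refine h.sub_mem ?_ ?_
    · split_ifs
      exacts [hc n, h.zero_mem n]
    · split_ifs with hn
      exacts [hn ▸ he, h.zero_mem n]
  have hsum : ∑ n ∈ insert m σ, c' n = 0 := by
    rw [Finset.sum_sub_distrib, Finset.sum_ite_mem,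
      Finset.inter_eq_right.2 (Finset.subset_insert m σ), hs]
    simp
  have := h.2.2.2.2.1 (insert m σ) c' (fun n _ => hc' n) hsum m (Finset.mem_insert_self m σ)
  simp only [c', if_true] at this
  exact (sub_eq_zero.1 this).symm

theorem exists_mem_map_eq (h : IsGrading k f E gE) (h' : IsGrading k f E' gE')
    (φ : E →ₗ[(GWA k f)ᵐᵒᵖ] E') (hφ : ∀ n, φ '' gE n ⊆ gE' n) {n : ℤ} {e : E}
    (he : φ e ∈ gE' n) : ∃ e₀ ∈ gE n, φ e₀ = φ e := by
  obtain ⟨σ, c, hc, rfl⟩ := h.exists_sum e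
  refine ⟨if n ∈ σ then c n else 0, ?_, ?_⟩
  · split_ifs
    exacts [hc n, h.zero_mem n]
  · rw [h'.eq_of_sum_eq (fun n => hφ n ⟨c n, hc n, rfl⟩) he (map_sum φ c σ).symm, apply_ite φ,
      map_zero]

theorem map_qgrade (h : IsGrading k f E gE) {I : Submodule (GWA k f)ᵐᵒᵖ (GWA k f)} {e : E}
    (he : e ∈ gE s) (hI : I ≤ LinearMap.ker (orbitMap e)) (n : ℤ) :
    I.liftQ (orbitMap e) hI '' qgrade k f I s n ⊆ gE n := by
  rintro _ ⟨_, ⟨a, ha, rfl⟩, rfl⟩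
  have := h.smul_mem he ha
  rwa [add_sub_cancel] at this

end IsGrading

theorem qgrade_sub (I : Submodule (GWA k f)ᵐᵒᵖ (GWA k f)) (d n : ℤ) :
    qgrade k f I t (n - d) = qgrade k f I (t + d) n := by
  rw [qgrade, qgrade, sub_sub, add_comm d]

theorem mk_one_mem_qgrade (I : Submodule (GWA k f)ᵐᵒᵖ (GWA k f)) :
    Submodule.Quotient.mk 1 ∈ qgrade k f I s s :=
  ⟨1, sub_self s ▸ SetLike.one_mem_graded (gwaComp k f), rfl⟩

theorem isGrading_qgrade (hP : IsWeightInterval k f s P) (t : ℤ) :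
    IsGrading k f (ModuleCat.of _ (GWA k f ⧸ weightIdeal k f s P))
      (qgrade k f (weightIdeal k f s P) t) := by
  refine ⟨fun n => ⟨0, zero_mem _, rfl⟩, ?_, ?_, fun e => ?_, fun σ c hc hsum => ?_, ?_⟩
  · rintro n _ ⟨a, ha, rfl⟩ _ ⟨b, hb, rfl⟩
    exact ⟨a + b, add_mem ha hb, rfl⟩
  · rintro n _ ⟨a, ha, rfl⟩
    exact ⟨-a, neg_mem ha, rfl⟩
  · obtain ⟨a, rfl⟩ := Submodule.Quotient.mk_surjective _ e
    obtain ⟨σ, c, hc, rfl⟩ := exists_sum_mem_gwaComp a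
    refine ⟨σ.map (addRightEmbedding t), fun n => Submodule.Quotient.mk (c (n - t)),
      fun n => ⟨_, hc _, rfl⟩, ?_⟩
    simp only [Finset.sum_map, addRightEmbedding_apply, add_sub_cancel_right]
    exact map_sum (weightIdeal k f s P).mkQ c σ
  · choose! a ha hac using hc
    have hmem : ∑ n ∈ σ, a n ∈ weightIdeal k f s P := by
      rw [← Submodule.Quotient.mk_eq_zero, ← Submodule.mkQ_apply, map_sum, ← hsum]
      exact Finset.sum_congr rfl hac
    intro n hn
    rw [← hac n hn]
    exact (Submodule.Quotient.mk_eq_zero _).2 (hP.mem_weightIdeal_of_sum_mem ha hmem hn)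
  · rintro n i _ ⟨a, ha, rfl⟩ b hb
    refine ⟨a * b, ?_, rfl⟩
    rw [add_sub_right_comm]
    exact SetLike.mul_mem_graded ha hb

theorem eq_zero_of_mem_qgrade {n : ℤ} {w : GWA k f ⧸ weightIdeal k f t Q}
    (hw : w ∈ qgrade k f (weightIdeal k f t Q) t n) (hn : n ∉ Q) : w = 0 := by
  obtain ⟨a, ha, rfl⟩ := hw
  exact (Submodule.Quotient.mk_eq_zero _).2
    (mem_weightIdeal_of_mem_gwaComp ha fun h => (hn (by simpa using h)).elim)

theorem smul_aeval_of_mem_qgrade {n : ℤ} {w : GWA k f ⧸ weightIdeal k f t Q}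
    (hw : w ∈ qgrade k f (weightIdeal k f t Q) t n) (p : k[X]) :
    w <• aeval 𝐳 p = w <• algebraMap k (GWA k f) (p.eval (n : k)) := by
  obtain ⟨a, ha, rfl⟩ := hw
  refine (Submodule.Quotient.eq _).2 ?_
  change a * aeval 𝐳 p - a * algebraMap k (GWA k f) (p.eval (n : k)) ∈ _
  rw [mul_aeval_of_mem_gwaComp ha, ← Algebra.commutes, ← sub_mul, ← aeval_C (R := k) 𝐳, ← map_sub]
  refine aeval_mul_mem_weightIdeal ?_ a
  simp

theorem exists_eq_mk_one_smul_of_mem_qgrade {w : GWA k f ⧸ weightIdeal k f t Q}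
    (hw : w ∈ qgrade k f (weightIdeal k f t Q) t t) :
    ∃ c : k, w = Submodule.Quotient.mk 1 <• algebraMap k (GWA k f) c := by
  obtain ⟨a, ha, rfl⟩ := hw
  rw [sub_self] at ha
  obtain ⟨p, rfl⟩ := mem_gwaComp.1 ha
  refine ⟨p.eval (t : k), ?_⟩
  rw [gwaMon_zero, mul_one, ← smul_aeval_of_mem_qgrade (mk_one_mem_qgrade _), ←
    Submodule.Quotient.mk_smul, op_smul_eq_mul, one_mul]

end Gradings

section Splitting

open scoped RightActions

local notation "𝐱" => gwaX k f
local notation "𝐲" => gwaY k f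
local notation "𝐳" => gwaZ k f

variable {k f} {s t d : ℤ} {P Q : Set ℤ}

namespace IsGradedExt

variable {E : ModuleCat.{0} (GWA k f)ᵐᵒᵖ} {gE : ℤ → Set E}

section Generator

variable {IT IS : Submodule (GWA k f)ᵐᵒᵖ (GWA k f)} {ι : (GWA k f ⧸ IT) →ₗ[(GWA k f)ᵐᵒᵖ] E}
  {π : E →ₗ[(GWA k f)ᵐᵒᵖ] (GWA k f ⧸ IS)} {u : E}

theorem gradedSplits_of_le_ker (h : IsGradedExt k f IT t IS s d E gE ι π) (hu : u ∈ gE s)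
    (hπu : π u = Submodule.Quotient.mk 1) (hI : IS ≤ LinearMap.ker (orbitMap u)) :
    GradedSplits k f IS s E gE π :=
  ⟨IS.liftQ (orbitMap u) hI, Submodule.linearMap_qext _ (LinearMap.ext (map_smul_eq_mk hπu)),
    h.1.map_qgrade hu hI⟩

theorem map_eq_zero_iff_exists (h : IsGradedExt k f IT t IS s d E gE ι π) {e : E} :
    π e = 0 ↔ ∃ w, ι w = e := by
  rw [← LinearMap.mem_range, h.2.2.2.1, LinearMap.mem_ker]

end Generator

variable {ι : (GWA k f ⧸ weightIdeal k f t Q) →ₗ[(GWA k f)ᵐᵒᵖ] E}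
  {π : E →ₗ[(GWA k f)ᵐᵒᵖ] (GWA k f ⧸ weightIdeal k f s P)} {u : E}

theorem exists_lift (hP : IsWeightInterval k f s P)
    (h : IsGradedExt k f (weightIdeal k f t Q) t (weightIdeal k f s P) s d E gE ι π) :
    ∃ u ∈ gE s, π u = Submodule.Quotient.mk 1 := by
  obtain ⟨e, he⟩ := h.2.2.1 (Submodule.Quotient.mk 1)
  have hπe : π e ∈ qgrade k f (weightIdeal k f s P) s s := he ▸ mk_one_mem_qgrade _
  rw [← he]
  exact h.1.exists_mem_map_eq (isGrading_qgrade hP s) π h.2.2.2.2.2 hπe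

theorem exists_mem_qgrade_map_eq (hQ : IsWeightInterval k f t Q)
    (h : IsGradedExt k f (weightIdeal k f t Q) t (weightIdeal k f s P) s d E gE ι π) {n : ℤ}
    {e : E} (he : e ∈ gE n) (hπe : π e = 0) :
    ∃ w ∈ qgrade k f (weightIdeal k f t Q) t (n - d), ι w = e := by
  obtain ⟨w, rfl⟩ := h.map_eq_zero_iff_exists.1 hπe
  rw [qgrade_sub]
  exact (isGrading_qgrade hQ (t + d)).exists_mem_map_eq h.1 ι
    (fun n => qgrade_sub (t := t) (weightIdeal k f t Q) d n ▸ h.2.2.2.2.1 n) he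

theorem exists_map_eq_smul (hQ : IsWeightInterval k f t Q)
    (h : IsGradedExt k f (weightIdeal k f t Q) t (weightIdeal k f s P) s d E gE ι π)
    (hu : u ∈ gE s) (hπu : π u = Submodule.Quotient.mk 1) {i : ℤ} {a : GWA k f}
    (ha : a ∈ gwaComp k f i) (haP : a ∈ weightIdeal k f s P) :
    ∃ w ∈ qgrade k f (weightIdeal k f t Q) t (s + i - d), ι w = u <• a := by
  refine h.exists_mem_qgrade_map_eq hQ (h.1.smul_mem hu ha) ?_
  rwa [map_smul_eq_mk hπu, Submodule.Quotient.mk_eq_zero]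

theorem smul_eq_zero_of_mem_gwaComp (hQ : IsWeightInterval k f t Q)
    (h : IsGradedExt k f (weightIdeal k f t Q) t (weightIdeal k f s P) s 0 E gE ι π)
    (hu : u ∈ gE s) (hπu : π u = Submodule.Quotient.mk 1) {n : ℤ} (hnQ : n ∉ Q) {a : GWA k f}
    (ha : a ∈ gwaComp k f (n - s)) (haP : a ∈ weightIdeal k f s P) : u <• a = 0 := by
  obtain ⟨w, hw, hwa⟩ := h.exists_map_eq_smul hQ hu hπu ha haP
  rw [add_sub_cancel, sub_zero] at hw
  rw [← hwa, eq_zero_of_mem_qgrade hw hnQ, map_zero]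

/- The degree-`s` lift `u` of the generator is corrected to `v = u p(z)` with `p(s) = 1` and
`p(s - d) = 0`: the kernel element `u a` with `a` of degree `i` has `z`-weight `s + i - d`, so that
`v a = u a p(z - i)` vanishes. -/
theorem gradedSplits_of_ne_zero [CharZero k] (hP : IsWeightInterval k f s P)
    (hQ : IsWeightInterval k f t Q)
    (h : IsGradedExt k f (weightIdeal k f t Q) t (weightIdeal k f s P) s d E gE ι π)
    (hd : d ≠ 0) : GradedSplits k f (weightIdeal k f s P) s E gE π := by
  obtain ⟨u, hu, hπu⟩ := h.exists_lift hP
  obtain ⟨p, hps, hpd⟩ : ∃ p : k[X], p.eval (s : k) = 1 ∧ p.eval ((s : k) - d) = 0 := by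
    refine ⟨1 + C (d : k)⁻¹ * (X - C (s : k)), by simp, ?_⟩
    have : (d : k) ≠ 0 := Int.cast_ne_zero.2 hd
    simp [this]
  have hv : u <• aeval 𝐳 p ∈ gE s := add_zero s ▸ h.1.smul_mem hu (aeval_mem_gwaComp p)
  have hπv : π (u <• aeval 𝐳 p) = Submodule.Quotient.mk 1 := by
    rw [map_smul, hπu, smul_aeval_of_mem_qgrade (mk_one_mem_qgrade _), hps, map_one,
      MulOpposite.op_one, one_smul]
  have hker {i : ℤ} {a : GWA k f} (ha : a ∈ gwaComp k f i) (haP : a ∈ weightIdeal k f s P) :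
      u <• aeval 𝐳 p <• a = 0 := by
    obtain ⟨w, hw, hwa⟩ := h.exists_map_eq_smul hQ hu hπu ha haP
    have hpi : (p.comp (X - (i : k[X]))).eval ((s + i - d : ℤ) : k) = 0 := by
      simp only [eval_comp, eval_sub, eval_X, eval_intCast, Int.cast_sub, Int.cast_add]
      rw [add_sub_right_comm, add_sub_cancel_right, hpd]
    rw [op_smul_op_smul, aeval_mul_of_mem_gwaComp ha, ← op_smul_op_smul, ← hwa, ← map_smul,
      smul_aeval_of_mem_qgrade hw, hpi, map_zero, MulOpposite.op_zero, zero_smul, map_zero]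
  exact h.gradedSplits_of_le_ker hv hπv (weightIdeal_le
    (hker (gwaZ_sub_mem_gwaComp s) gwaZ_sub_mem_weightIdeal)
    fun n hn => hker (gwaMon_mem_gwaComp _) (gwaMon_mem_weightIdeal hn))

end IsGradedExt

theorem exists_mem_uIcc_notMem_union {α : Type*} [LinearOrder α] {P Q : Set α}
    (hP : P.OrdConnected) (hQ : Q.OrdConnected) (hPQ : ¬(P ∪ Q).OrdConnected) {x y : α}
    (hx : x ∈ P) (hy : y ∈ Q) : ∃ r ∈ Set.uIcc x y, r ∉ P ∪ Q := by
  by_contra! hxy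
  have hmixed {p q : α} (hp : p ∈ P) (hq : q ∈ Q) : Set.uIcc p q ⊆ P ∪ Q := by
    refine Set.uIcc_subset_uIcc_union_uIcc (b := x) |>.trans (Set.union_subset ?_ ?_)
    · exact (hP.uIcc_subset hp hx).trans Set.subset_union_left
    · refine Set.uIcc_subset_uIcc_union_uIcc (b := y) |>.trans (Set.union_subset hxy ?_)
      exact (hQ.uIcc_subset hy hq).trans Set.subset_union_right
  refine hPQ (Set.ordConnected_iff_uIcc_subset.2 ?_)
  rintro p (hp | hp) q (hq | hq)
  · exact (hP.uIcc_subset hp hq).trans Set.subset_union_left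
  · exact hmixed hp hq
  · exact Set.uIcc_comm q p ▸ hmixed hq hp
  · exact (hQ.uIcc_subset hp hq).trans Set.subset_union_right

theorem extVanishes_of_not_ordConnected_union [CharZero k] (hP : IsWeightInterval k f s P)
    (hQ : IsWeightInterval k f t Q) (hdisj : Disjoint P Q) (hPQ : ¬(P ∪ Q).OrdConnected) :
    ExtVanishes k f (weightIdeal k f t Q) t (weightIdeal k f s P) s := by
  intro d E gE ι π h
  rcases eq_or_ne d 0 with rfl | hd
  swap
  · exact h.gradedSplits_of_ne_zero hP hQ hd
  obtain ⟨u, hu, hπu⟩ := h.exists_lift hP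
  have hsQ : s ∉ Q := Set.disjoint_left.1 hdisj hP.mem
  refine h.gradedSplits_of_le_ker hu hπu (weightIdeal_le ?_ fun n hnP => ?_)
  · exact h.smul_eq_zero_of_mem_gwaComp hQ hu hπu hsQ ((sub_self s).symm ▸ gwaZ_sub_mem_gwaComp s)
      gwaZ_sub_mem_weightIdeal
  have hker {r : ℤ} (hrP : r ∉ P) (hrQ : r ∉ Q) : u <• gwaMon k f (r - s) = 0 :=
    h.smul_eq_zero_of_mem_gwaComp hQ hu hπu hrQ (gwaMon_mem_gwaComp _) (gwaMon_mem_weightIdeal hrP)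
  by_cases hnQ : n ∈ Q
  · obtain ⟨r, hr, hrPQ⟩ :=
      exists_mem_uIcc_notMem_union hP.ordConnected hQ.ordConnected hPQ hP.mem hnQ
    rw [Set.mem_union, not_or] at hrPQ
    rw [LinearMap.mem_ker, orbitMap_apply, ← gwaMon_sub_mul_gwaMon_sub hr, ← op_smul_op_smul,
      hker hrPQ.1 hrPQ.2, smul_zero]
  · exact hker hnP hnQ

/- A product of two opposite steps across the end of `P` at the root `r` of `f` is multiplication
by `f(z)`, up to translation. -/
theorem exists_mul_eq_aeval_mul_gwaMon {r : ℤ} (hr : ¬(r ∈ P ↔ r + 1 ∈ P)) (s : ℤ) :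
    ∃ m ∉ P, ∃ n ∈ P, ∃ a ∈ gwaComp k f (m - s), ∃ b,
      a * b = aeval 𝐳 (f.comp (X + ((r - s : ℤ) : k[X]))) * gwaMon k f (n - s) := by
  by_cases hrP : r ∈ P
  · refine ⟨r + 1, fun h => hr (iff_of_true hrP h), r, hrP, gwaMon k f (r - s) * 𝐱, ?_, 𝐲, ?_⟩
    · rw [add_sub_right_comm]
      exact mul_gwaX_mem_gwaComp (gwaMon_mem_gwaComp _)
    · rw [mul_assoc, gwaX_mul_gwaY, mul_aeval_of_mem_gwaComp (gwaMon_mem_gwaComp _)]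
  · have hrP' : r + 1 ∈ P := by_contra fun h => hr (iff_of_false hrP h)
    refine ⟨r, hrP, r + 1, hrP', gwaMon k f (r + 1 - s) * 𝐲, ?_, 𝐱, ?_⟩
    · have := mul_gwaY_mem_gwaComp (gwaMon_mem_gwaComp (k := k) (f := f) (r + 1 - s))
      rwa [sub_right_comm, add_sub_cancel_right] at this
    · have hcomp : (X - 1 : k[X]).comp (X + ((r + 1 - s : ℤ) : k[X])) =
          X + ((r - s : ℤ) : k[X]) := by
        simp only [sub_comp, X_comp, one_comp, Int.cast_sub, Int.cast_add, Int.cast_one]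
        ring
      rw [mul_assoc, gwaY_mul_gwaX, mul_aeval_of_mem_gwaComp (gwaMon_mem_gwaComp _), comp_assoc,
        hcomp]

theorem exists_eq_sub_mul_of_eval_derivative_ne_zero {p : k[X]} {a : k} (hp : p.eval a = 0)
    (hp' : p.derivative.eval a ≠ 0) : ∃ q : k[X], p = (X - C a) * q ∧ q.eval a ≠ 0 := by
  obtain ⟨q, rfl⟩ := dvd_iff_isRoot.2 hp
  exact ⟨q, rfl, by simpa [derivative_mul] using hp'⟩

theorem IsGradedExt.smul_gwaZ_sub_eq_zero {E : ModuleCat.{0} (GWA k f)ᵐᵒᵖ} {gE : ℤ → Set E}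
    {ι : (GWA k f ⧸ weightIdeal k f s P) →ₗ[(GWA k f)ᵐᵒᵖ] E}
    {π : E →ₗ[(GWA k f)ᵐᵒᵖ] (GWA k f ⧸ weightIdeal k f s P)} {u : E}
    (hP : IsWeightInterval k f s P)
    (h : IsGradedExt k f (weightIdeal k f s P) s (weightIdeal k f s P) s 0 E gE ι π)
    (hu : u ∈ gE s) (hπu : π u = Submodule.Quotient.mk 1) {r : ℤ} (hr : ¬(r ∈ P ↔ r + 1 ∈ P))
    (hf' : f.derivative.eval (r : k) ≠ 0) : u <• (𝐳 - s) = 0 := by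
  obtain ⟨w, hw, hwu⟩ :=
    h.exists_map_eq_smul hP hu hπu (gwaZ_sub_mem_gwaComp s) gwaZ_sub_mem_weightIdeal
  rw [add_zero, sub_zero] at hw
  obtain ⟨c, rfl⟩ := exists_eq_mk_one_smul_of_mem_qgrade hw
  obtain ⟨m, hm, n, hn, a, ha, b, hab⟩ := exists_mul_eq_aeval_mul_gwaMon (f := f) hr s
  have hua : u <• a = 0 := h.smul_eq_zero_of_mem_gwaComp hP hu hπu hm ha
    (mem_weightIdeal_of_mem_gwaComp ha fun h => (hm (by simpa using h)).elim)
  obtain ⟨g, hg, hgs⟩ := exists_eq_sub_mul_of_eval_derivative_ne_zero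
    (p := f.comp (X + ((r - s : ℤ) : k[X]))) (a := (s : k))
    (by simpa [eval_comp] using hP.eval_eq_zero r hr) (by simpa [derivative_comp, eval_comp])
  have hzero : u <• (𝐳 - s) <• (aeval 𝐳 g * gwaMon k f (n - s)) = 0 := by
    have : (𝐳 - s) * (aeval 𝐳 g * gwaMon k f (n - s)) = a * b := by
      rw [hab, hg, map_mul, mul_assoc, map_sub, aeval_X, aeval_C, map_intCast]
    rw [op_smul_op_smul, this, ← op_smul_op_smul, hua, smul_zero]
  rw [← hwu, ← map_smul, op_smul_op_smul, ← Submodule.Quotient.mk_smul, op_smul_eq_mul, one_mul,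
    map_eq_zero_iff ι h.2.1, Submodule.Quotient.mk_eq_zero, hP.mem_weightIdeal_iff] at hzero
  have hc : c = 0 := by
    have := hzero n hn
    rw [← Algebra.smul_def, map_smul, weightCoord_aeval_mul, weightCoord_gwaMon] at this
    simpa [hgs] using this
  rw [← hwu, hc, map_zero, MulOpposite.op_zero, zero_smul, map_zero]

theorem extVanishes_self [CharZero k] (hP : IsWeightInterval k f s P) {r : ℤ}
    (hr : ¬(r ∈ P ↔ r + 1 ∈ P)) (hf' : f.derivative.eval (r : k) ≠ 0) :
    ExtVanishes k f (weightIdeal k f s P) s (weightIdeal k f s P) s := by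
  intro d E gE ι π h
  rcases eq_or_ne d 0 with rfl | hd
  swap
  · exact h.gradedSplits_of_ne_zero hP hP hd
  obtain ⟨u, hu, hπu⟩ := h.exists_lift hP
  exact h.gradedSplits_of_le_ker hu hπu (weightIdeal_le
    (h.smul_gwaZ_sub_eq_zero hP hu hπu hr hf') fun n hn =>
      h.smul_eq_zero_of_mem_gwaComp hP hu hπu hn (gwaMon_mem_gwaComp _) (gwaMon_mem_weightIdeal hn))

end Splitting

section ExtensionMorphisms

open scoped RightActions

variable {k f} {c c' : k} {IT IS : Submodule (GWA k f)ᵐᵒᵖ (GWA k f)}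
  {E E' E'' : ModuleCat.{0} (GWA k f)ᵐᵒᵖ} {gE : ℤ → Set E} {gE' : ℤ → Set E'} {gE'' : ℤ → Set E''}
  {ι : (GWA k f ⧸ IT) →ₗ[(GWA k f)ᵐᵒᵖ] E} {π : E →ₗ[(GWA k f)ᵐᵒᵖ] (GWA k f ⧸ IS)}
  {ι' : (GWA k f ⧸ IT) →ₗ[(GWA k f)ᵐᵒᵖ] E'} {π' : E' →ₗ[(GWA k f)ᵐᵒᵖ] (GWA k f ⧸ IS)}
  {ι'' : (GWA k f ⧸ IT) →ₗ[(GWA k f)ᵐᵒᵖ] E''} {π'' : E'' →ₗ[(GWA k f)ᵐᵒᵖ] (GWA k f ⧸ IS)}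
  {ψ : E →ₗ[(GWA k f)ᵐᵒᵖ] E'} {ψ' : E' →ₗ[(GWA k f)ᵐᵒᵖ] E''} {s t d : ℤ}

/-- `ψ` is a degree-zero homomorphism of extensions which is the identity on the quotients and the
scalar `c` on the submodules. -/
structure IsScaledExtHom (c : k) (gE : ℤ → Set E) (ι : (GWA k f ⧸ IT) →ₗ[(GWA k f)ᵐᵒᵖ] E)
    (π : E →ₗ[(GWA k f)ᵐᵒᵖ] (GWA k f ⧸ IS)) (gE' : ℤ → Set E')
    (ι' : (GWA k f ⧸ IT) →ₗ[(GWA k f)ᵐᵒᵖ] E') (π' : E' →ₗ[(GWA k f)ᵐᵒᵖ] (GWA k f ⧸ IS))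
    (ψ : E →ₗ[(GWA k f)ᵐᵒᵖ] E') : Prop where
  map_inl : ∀ w, ψ (ι w) = ι' (w <• algebraMap k (GWA k f) c)
  map_proj : ∀ e, π' (ψ e) = π e
  image_subset : ∀ n, ψ '' gE n ⊆ gE' n

namespace IsScaledExtHom

theorem comp (hψ' : IsScaledExtHom c' gE' ι' π' gE'' ι'' π'' ψ')
    (hψ : IsScaledExtHom c gE ι π gE' ι' π' ψ) :
    IsScaledExtHom (c * c') gE ι π gE'' ι'' π'' (ψ' ∘ₗ ψ) where
  map_inl w := by
    rw [LinearMap.comp_apply, hψ.map_inl, hψ'.map_inl, op_smul_op_smul, ← map_mul]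
  map_proj e := (hψ'.map_proj _).trans (hψ.map_proj e)
  image_subset n := by
    rw [LinearMap.coe_comp, Set.image_comp]
    exact (Set.image_mono (hψ.image_subset n)).trans (hψ'.image_subset n)

theorem map_inl_inv_smul (hψ : IsScaledExtHom c gE ι π gE' ι' π' ψ) (hc : c ≠ 0)
    (w : GWA k f ⧸ IT) : ψ (ι (w <• algebraMap k (GWA k f) c⁻¹)) = ι' w := by
  rw [hψ.map_inl, op_smul_op_smul, ← map_mul, inv_mul_cancel₀ hc, map_one, MulOpposite.op_one,
    one_smul]

theorem bijective (hψ : IsScaledExtHom c gE ι π gE' ι' π' ψ) (hc : c ≠ 0)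
    (h : IsGradedExt k f IT t IS s d E gE ι π) (h' : IsGradedExt k f IT t IS s d E' gE' ι' π') :
    Function.Bijective ψ := by
  constructor
  · refine (injective_iff_map_eq_zero ψ).2 fun e he => ?_
    obtain ⟨w, rfl⟩ := h.map_eq_zero_iff_exists.1 (by rw [← hψ.map_proj, he, map_zero])
    rw [hψ.map_inl, map_eq_zero_iff ι' h'.2.1] at he
    rw [map_eq_zero_iff ι h.2.1, ← one_smul (GWA k f)ᵐᵒᵖ w, ← MulOpposite.op_one, ← map_one
      (algebraMap k (GWA k f)), ← mul_inv_cancel₀ hc, map_mul, ← op_smul_op_smul, he, smul_zero]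
  · intro e'
    obtain ⟨e, he⟩ := h.2.2.1 (π' e')
    obtain ⟨w, hw⟩ := h'.map_eq_zero_iff_exists.1
      (show π' (e' - ψ e) = 0 by rw [map_sub, hψ.map_proj, he, sub_self])
    exact ⟨e + ι (w <• algebraMap k (GWA k f) c⁻¹), by
      rw [map_add, hψ.map_inl_inv_smul hc, hw, add_sub_cancel]⟩

theorem exists_symm (hψ : IsScaledExtHom c gE ι π gE' ι' π' ψ) (hc : c ≠ 0)
    (h : IsGradedExt k f IT t IS s d E gE ι π) (h' : IsGradedExt k f IT t IS s d E' gE' ι' π') :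
    ∃ φ : E' →ₗ[(GWA k f)ᵐᵒᵖ] E, IsScaledExtHom c⁻¹ gE' ι' π' gE ι π φ := by
  let ψe := LinearEquiv.ofBijective ψ (hψ.bijective hc h h')
  refine ⟨ψe.symm, fun w => ?_, fun e' => ?_, ?_⟩
  · exact ψe.symm_apply_eq.2 (hψ.map_inl_inv_smul hc w).symm
  · exact (hψ.map_proj _).symm.trans (congr_arg π' (ψe.apply_symm_apply e'))
  · rintro n _ ⟨e', he', rfl⟩
    obtain ⟨e, rfl⟩ := ψe.surjective e'
    obtain ⟨e₀, he₀, hee₀⟩ := h.1.exists_mem_map_eq h'.1 ψ hψ.image_subset he'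
    have hee : e₀ = e := ψe.injective hee₀
    change ψe.symm (ψe e) ∈ gE n
    rwa [ψe.symm_apply_apply, ← hee]

end IsScaledExtHom

end ExtensionMorphisms

section Adjacent

open scoped RightActions

/-- `P` and `Q` are neighbouring disjoint weight intervals around `s` and `t`, and no root of `f`
cuts `Q`. This is the situation in which `(A/I_Q)⟨t⟩` has a nonsplit extension by `(A/I_P)⟨s⟩`,
where `I_Q` and `I_P` are the corresponding weight ideals. -/
structure IsAdjacent (s : ℤ) (P : Set ℤ) (t : ℤ) (Q : Set ℤ) : Prop where
  left : IsWeightInterval k f s P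
  right : IsWeightInterval k f t Q
  disjoint : Disjoint P Q
  ordConnected_union : (P ∪ Q).OrdConnected
  eval_ne_zero : ∀ r : ℤ, r ∈ Q → r + 1 ∈ Q → f.eval (r : k) ≠ 0

variable {k f} {s t : ℤ} {P Q : Set ℤ}

namespace IsAdjacent

theorem union (h : IsAdjacent k f s P t Q) : IsWeightInterval k f s (P ∪ Q) :=
  h.left.union h.right h.ordConnected_union

theorem notMem_right (h : IsAdjacent k f s P t Q) : s ∉ Q :=
  Set.disjoint_left.1 h.disjoint h.left.mem

theorem gwaMon_mem_weightIdeal_left (h : IsAdjacent k f s P t Q) :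
    gwaMon k f (t - s) ∈ weightIdeal k f s P :=
  gwaMon_mem_weightIdeal (Set.disjoint_right.1 h.disjoint h.right.mem)

theorem gwaMon_mul_mem_weightIdeal_iff (h : IsAdjacent k f s P t Q) {a : GWA k f} :
    gwaMon k f (t - s) * a ∈ weightIdeal k f s (P ∪ Q) ↔ a ∈ weightIdeal k f t Q := by
  have hP : ∀ n ∈ P, weightCoord s (gwaMon k f (t - s) * a) n = 0 :=
    h.left.mem_weightIdeal_iff.1 (mul_mem_weightIdeal h.gwaMon_mem_weightIdeal_left a)
  have hQ (n : ℤ) (hn : n ∈ Q) :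
      weightCoord s (gwaMon k f (t - s) * a) n = 0 ↔ weightCoord t a n = 0 := by
    rw [weightCoord_mul_of_mem_gwaComp (gwaMon_mem_gwaComp _), mul_eq_zero, or_iff_right
      (weightCoord_gwaMon_mul_gwaMon_ne_zero h.right.ordConnected h.eval_ne_zero h.right.mem hn)]
  rw [h.union.mem_weightIdeal_iff, h.right.mem_weightIdeal_iff]
  refine ⟨fun ha n hn => (hQ n hn).1 (ha n (Or.inr hn)), fun ha n hn => ?_⟩
  exact hn.elim (hP n) fun hn => (hQ n hn).2 (ha n hn)

theorem weightIdeal_left_le (h : IsAdjacent k f s P t Q) {I : Submodule (GWA k f)ᵐᵒᵖ (GWA k f)}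
    (hI : weightIdeal k f s (P ∪ Q) ≤ I) (ht : gwaMon k f (t - s) ∈ I) :
    weightIdeal k f s P ≤ I := by
  refine weightIdeal_le (hI gwaZ_sub_mem_weightIdeal) fun n hnP => ?_
  by_cases hnQ : n ∈ Q
  swap
  · exact hI (gwaMon_mem_weightIdeal fun hn => hn.elim hnP hnQ)
  set b := gwaMon k f (t - s) * gwaMon k f (n - t)
  have hb : b ∈ gwaComp k f (n - s) := by
    simpa using mul_gwaMon_mem_gwaComp (gwaMon_mem_gwaComp (k := k) (f := f) (t - s)) (n - t)
  have hbn : weightCoord s b n ≠ 0 :=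
    weightCoord_gwaMon_mul_gwaMon_ne_zero h.right.ordConnected h.eval_ne_zero h.right.mem hnQ
  have hsub : gwaMon k f (n - s) - (weightCoord s b n)⁻¹ • b ∈ weightIdeal k f s (P ∪ Q) := by
    refine mem_weightIdeal_of_mem_gwaComp
      (sub_mem (gwaMon_mem_gwaComp _) (Submodule.smul_mem _ _ hb)) fun _ => ?_
    rw [add_sub_cancel, map_sub, map_smul, Pi.sub_apply, Pi.smul_apply, smul_eq_mul,
      inv_mul_cancel₀ hbn, weightCoord_gwaMon, add_sub_cancel, Pi.single_eq_same, sub_self]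
  have hbI : (weightCoord s b n)⁻¹ • b ∈ I := by
    rw [Algebra.smul_def, Algebra.commutes, mul_assoc]
    exact I.smul_mem (MulOpposite.op _) ht
  exact (Submodule.sub_mem_iff_left I hbI).1 (hI hsub)

/-- The submodule of the extension `A/I_{P ∪ Q}` generated in degree `t`. -/
def inl (h : IsAdjacent k f s P t Q) :
    (GWA k f ⧸ weightIdeal k f t Q) →ₗ[(GWA k f)ᵐᵒᵖ] GWA k f ⧸ weightIdeal k f s (P ∪ Q) :=
  (weightIdeal k f t Q).liftQ (orbitMap (Submodule.Quotient.mk (gwaMon k f (t - s))))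
    fun _ ha => (Submodule.Quotient.mk_eq_zero _).2 (h.gwaMon_mul_mem_weightIdeal_iff.2 ha)

theorem inl_mk (h : IsAdjacent k f s P t Q) (a : GWA k f) :
    h.inl (Submodule.Quotient.mk a) = Submodule.Quotient.mk (gwaMon k f (t - s) * a) := rfl

theorem isGradedExt (h : IsAdjacent k f s P t Q) :
    IsGradedExt k f (weightIdeal k f t Q) t (weightIdeal k f s P) s 0
      (ModuleCat.of _ (GWA k f ⧸ weightIdeal k f s (P ∪ Q)))
      (qgrade k f (weightIdeal k f s (P ∪ Q)) s) h.inl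
      (Submodule.factor (weightIdeal_anti Set.subset_union_left)) := by
  refine ⟨isGrading_qgrade h.union s, ?_, Submodule.factor_surjective _,
    le_antisymm ?_ ?_, fun n => ?_, ?_⟩
  · refine (injective_iff_map_eq_zero h.inl).2 fun w hw => ?_
    obtain ⟨a, rfl⟩ := Submodule.Quotient.mk_surjective _ w
    rw [inl_mk, Submodule.Quotient.mk_eq_zero, h.gwaMon_mul_mem_weightIdeal_iff] at hw
    exact (Submodule.Quotient.mk_eq_zero _).2 hw
  · rintro _ ⟨w, rfl⟩
    obtain ⟨a, rfl⟩ := Submodule.Quotient.mk_surjective _ w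
    exact (Submodule.Quotient.mk_eq_zero _).2 (mul_mem_weightIdeal h.gwaMon_mem_weightIdeal_left a)
  · have hle : weightIdeal k f s P ≤
        (LinearMap.range h.inl).comap (weightIdeal k f s (P ∪ Q)).mkQ :=
      h.weightIdeal_left_le
        ((Submodule.ker_mkQ _).ge.trans (LinearMap.ker_le_comap _))
        ⟨Submodule.Quotient.mk 1, by rw [h.inl_mk, mul_one]; rfl⟩
    intro e he
    obtain ⟨a, rfl⟩ := Submodule.Quotient.mk_surjective _ e
    exact hle ((Submodule.Quotient.mk_eq_zero _).1 he)
  · rw [sub_zero]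
    exact (isGrading_qgrade h.union s).map_qgrade ⟨_, gwaMon_mem_gwaComp _, rfl⟩ _ n
  · rintro n _ ⟨_, ⟨a, ha, rfl⟩, rfl⟩
    exact ⟨a, ha, rfl⟩

theorem not_gradedSplits (h : IsAdjacent k f s P t Q) :
    ¬GradedSplits k f (weightIdeal k f s P) s
      (ModuleCat.of _ (GWA k f ⧸ weightIdeal k f s (P ∪ Q)))
      (qgrade k f (weightIdeal k f s (P ∪ Q)) s)
      (Submodule.factor (weightIdeal_anti Set.subset_union_left)) := by
  rintro ⟨σ, hσ, hσ_mem⟩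
  obtain ⟨c, hc⟩ := exists_eq_mk_one_smul_of_mem_qgrade
    (hσ_mem s ⟨_, mk_one_mem_qgrade (weightIdeal k f s P), rfl⟩)
  have hσ_mk (a : GWA k f) :
      σ (Submodule.Quotient.mk a) = Submodule.Quotient.mk (algebraMap k (GWA k f) c * a) := by
    rw [← one_mul a, ← op_smul_eq_mul, Submodule.Quotient.mk_smul, map_smul, hc, op_smul_op_smul,
      ← Submodule.Quotient.mk_smul, op_smul_eq_mul, op_smul_eq_mul, one_mul, one_mul]
  have hc1 : Submodule.Quotient.mk (algebraMap k (GWA k f) c) =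
      (Submodule.Quotient.mk 1 : GWA k f ⧸ weightIdeal k f s P) := by
    have := LinearMap.congr_fun hσ (Submodule.Quotient.mk 1)
    rwa [LinearMap.comp_apply, hσ_mk, mul_one] at this
  have hc0 : algebraMap k (GWA k f) c * gwaMon k f (t - s) ∈ weightIdeal k f s (P ∪ Q) := by
    rw [← Submodule.Quotient.mk_eq_zero, ← hσ_mk,
      (Submodule.Quotient.mk_eq_zero _).2 h.gwaMon_mem_weightIdeal_left, map_zero]
  have hcs := h.left.mem_weightIdeal_iff.1 ((Submodule.Quotient.eq _).1 hc1) s h.left.mem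
  have hct := h.union.mem_weightIdeal_iff.1 hc0 t (Or.inr h.right.mem)
  rw [Algebra.algebraMap_eq_smul_one, map_sub, map_smul, weightCoord_one] at hcs
  rw [← Algebra.smul_def, map_smul, weightCoord_gwaMon, add_sub_cancel] at hct
  have hc_one : c = 1 := by simpa [sub_eq_zero] using hcs
  have hc_zero : c = 0 := by simpa using hct
  exact one_ne_zero (hc_one.symm.trans hc_zero)

section Universal

variable {E : ModuleCat.{0} (GWA k f)ᵐᵒᵖ} {gE : ℤ → Set E}
  {ι : (GWA k f ⧸ weightIdeal k f t Q) →ₗ[(GWA k f)ᵐᵒᵖ] E}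
  {π : E →ₗ[(GWA k f)ᵐᵒᵖ] (GWA k f ⧸ weightIdeal k f s P)} {u : E}

theorem weightIdeal_union_le_ker (h : IsAdjacent k f s P t Q)
    (hE : IsGradedExt k f (weightIdeal k f t Q) t (weightIdeal k f s P) s 0 E gE ι π)
    (hu : u ∈ gE s) (hπu : π u = Submodule.Quotient.mk 1) :
    weightIdeal k f s (P ∪ Q) ≤ LinearMap.ker (orbitMap u) := by
  refine weightIdeal_le ?_ fun n hn => ?_
  · exact hE.smul_eq_zero_of_mem_gwaComp h.right hu hπu h.notMem_right
      ((sub_self s).symm ▸ gwaZ_sub_mem_gwaComp s) gwaZ_sub_mem_weightIdeal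
  · exact hE.smul_eq_zero_of_mem_gwaComp h.right hu hπu (fun hnQ => hn (Or.inr hnQ))
      (gwaMon_mem_gwaComp _) (gwaMon_mem_weightIdeal fun hnP => hn (Or.inl hnP))

theorem exists_isScaledExtHom (h : IsAdjacent k f s P t Q)
    (hE : IsGradedExt k f (weightIdeal k f t Q) t (weightIdeal k f s P) s 0 E gE ι π)
    (hns : ¬GradedSplits k f (weightIdeal k f s P) s E gE π) :
    ∃ c : k, c ≠ 0 ∧ ∃ φ, IsScaledExtHom c
      (E := ModuleCat.of _ (GWA k f ⧸ weightIdeal k f s (P ∪ Q)))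
      (qgrade k f (weightIdeal k f s (P ∪ Q)) s) h.inl
      (Submodule.factor (weightIdeal_anti Set.subset_union_left)) gE ι π φ := by
  obtain ⟨u, hu, hπu⟩ := hE.exists_lift h.left
  have hker := h.weightIdeal_union_le_ker hE hu hπu
  obtain ⟨w, hw, hwu⟩ :=
    hE.exists_map_eq_smul h.right hu hπu (gwaMon_mem_gwaComp (t - s)) h.gwaMon_mem_weightIdeal_left
  rw [add_sub_cancel, sub_zero] at hw
  obtain ⟨c, rfl⟩ := exists_eq_mk_one_smul_of_mem_qgrade hw
  have hc : c ≠ 0 := by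
    rintro rfl
    refine hns (hE.gradedSplits_of_le_ker hu hπu (h.weightIdeal_left_le hker ?_))
    rw [LinearMap.mem_ker, orbitMap_apply, ← hwu, map_zero, MulOpposite.op_zero, zero_smul,
      map_zero]
  refine ⟨c, hc, (weightIdeal k f s (P ∪ Q)).liftQ (orbitMap u) hker, fun w => ?_, fun e => ?_,
    hE.1.map_qgrade hu hker⟩
  · obtain ⟨a, rfl⟩ := Submodule.Quotient.mk_surjective _ w
    rw [inl_mk, Submodule.liftQ_apply, orbitMap_apply, ← op_smul_op_smul, ← hwu, ← map_smul,
      op_smul_op_smul, ← Submodule.Quotient.mk_smul, ← Submodule.Quotient.mk_smul, op_smul_eq_mul,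
      op_smul_eq_mul, one_mul, Algebra.commutes]
  · obtain ⟨a, rfl⟩ := Submodule.Quotient.mk_surjective _ e
    exact map_smul_eq_mk hπu a

end Universal

theorem extOneDim [CharZero k] (h : IsAdjacent k f s P t Q) :
    ExtOneDim k f (weightIdeal k f t Q) t (weightIdeal k f s P) s := by
  refine ⟨fun d hd E gE ι π hE => hE.gradedSplits_of_ne_zero h.left h.right hd,
    ⟨_, _, _, _, h.isGradedExt, h.not_gradedSplits⟩, ?_⟩
  intro E gE ι π hE hns E' gE' ι' π' hE' hns'
  obtain ⟨c, hc, φ, hφ⟩ := h.exists_isScaledExtHom hE hns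
  obtain ⟨c', hc', φ', hφ'⟩ := h.exists_isScaledExtHom hE' hns'
  obtain ⟨χ, hχ⟩ := hφ.exists_symm hc h.isGradedExt hE
  have hψ := hφ'.comp hχ
  exact ⟨_, mul_ne_zero (inv_ne_zero hc) hc', _, hψ.map_inl, hψ.map_proj, hψ.image_subset⟩

end IsAdjacent

end Adjacent

section SpanningSets

local notation "𝐱" => gwaX k f
local notation "𝐲" => gwaY k f
local notation "𝐳" => gwaZ k f

variable {k f} {I : Submodule (GWA k f)ᵐᵒᵖ (GWA k f)}

theorem gwaMon_mem_of_mem_uIcc {l n : ℤ} (hl : l ∈ Set.uIcc 0 n) (h : gwaMon k f l ∈ I) :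
    gwaMon k f n ∈ I := by
  have := gwaMon_sub_mul_gwaMon_sub (k := k) (f := f) hl
  rw [sub_zero, sub_zero] at this
  exact this ▸ I.smul_mem (MulOpposite.op _) h

theorem gwaMon_mem_of_gwaX_mem (hx : 𝐱 ∈ I) {n : ℤ} (hn : 0 < n) : gwaMon k f n ∈ I := by
  rw [← gwaMon_one] at hx
  exact gwaMon_mem_of_mem_uIcc (Set.mem_uIcc_of_le (by lia) (by lia)) hx

theorem gwaMon_mem_of_gwaY_pow_mem {m : ℕ} (hy : 𝐲 ^ m ∈ I) {n : ℤ} (hn : n ≤ -m) :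
    gwaMon k f n ∈ I := by
  rw [← gwaMon_neg_natCast] at hy
  exact gwaMon_mem_of_mem_uIcc (Set.mem_uIcc_of_ge (by lia) (by lia)) hy

theorem gwaX_mem_weightIdeal {s : ℤ} {P : Set ℤ} (hs : s + 1 ∉ P) : 𝐱 ∈ weightIdeal k f s P := by
  rw [← gwaMon_one, ← add_sub_cancel_left s 1]
  exact gwaMon_mem_weightIdeal hs

theorem gwaY_pow_mem_weightIdeal {s : ℤ} {P : Set ℤ} {m : ℕ} (hs : s - m ∉ P) :
    𝐲 ^ m ∈ weightIdeal k f s P := by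
  have := gwaMon_mem_weightIdeal (k := k) (f := f) (s := s) hs
  rwa [sub_sub_cancel_left, gwaMon_neg_natCast] at this

theorem span_gwaX_eq_weightIdeal (s : ℤ) :
    Submodule.span (GWA k f)ᵐᵒᵖ {𝐱, 𝐳 - s} = weightIdeal k f s (Set.Iic s) := by
  refine le_antisymm (Submodule.span_le.2 (Set.pair_subset ?_ gwaZ_sub_mem_weightIdeal))
    (weightIdeal_le (Submodule.mem_span_of_mem (by simp)) fun n hn => ?_)
  · exact gwaX_mem_weightIdeal (by simp)
  · exact gwaMon_mem_of_gwaX_mem (Submodule.mem_span_of_mem (by simp)) (by simpa using hn)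

theorem span_gwaY_eq_weightIdeal (s : ℤ) :
    Submodule.span (GWA k f)ᵐᵒᵖ {𝐲, 𝐳 - s} = weightIdeal k f s (Set.Ici s) := by
  rw [← pow_one 𝐲]
  refine le_antisymm (Submodule.span_le.2 (Set.pair_subset ?_ gwaZ_sub_mem_weightIdeal))
    (weightIdeal_le (Submodule.mem_span_of_mem (by simp)) fun n hn => ?_)
  · exact gwaY_pow_mem_weightIdeal (by simp)
  · exact gwaMon_mem_of_gwaY_pow_mem (m := 1) (Submodule.mem_span_of_mem (by simp))
      (by rw [Set.mem_Ici] at hn; lia)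

theorem span_gwaY_pow_gwaX_eq_weightIdeal (m : ℕ) (s : ℤ) :
    Submodule.span (GWA k f)ᵐᵒᵖ {𝐲 ^ m, 𝐱, 𝐳 - s} = weightIdeal k f s (Set.Ioc (s - m) s) := by
  refine le_antisymm (Submodule.span_le.2 (Set.insert_subset ?_
    (Set.pair_subset ?_ gwaZ_sub_mem_weightIdeal)))
    (weightIdeal_le (Submodule.mem_span_of_mem (by simp)) fun n hn => ?_)
  · exact gwaY_pow_mem_weightIdeal (by simp)
  · exact gwaX_mem_weightIdeal (by simp)
  · rcases lt_or_ge s n with h | h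
    · exact gwaMon_mem_of_gwaX_mem (Submodule.mem_span_of_mem (by simp)) (by lia)
    · refine gwaMon_mem_of_gwaY_pow_mem (m := m) (Submodule.mem_span_of_mem (by simp)) ?_
      rw [Set.mem_Ioc] at hn
      lia

end SpanningSets

section CongruentRoots

/-- `f` has exactly the two integral roots `-α < 0`, both simple: the case of congruent roots. -/
structure HasCongruentRoots (α : ℕ) : Prop where
  pos : 0 < α
  eval_eq_zero_iff : ∀ r : ℤ, f.eval (r : k) = 0 ↔ r = -α ∨ r = 0
  eval_derivative_ne_zero : ∀ r : ℤ, f.eval (r : k) = 0 → f.derivative.eval (r : k) ≠ 0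

theorem hasCongruentRoots_mul_X_add_C [CharZero k] (α : ℕ+) :
    HasCongruentRoots k (X * (X + C (α : k))) α := by
  have hroot (r : ℤ) : eval (r : k) (X * (X + C (α : k))) = 0 ↔ r = -α ∨ r = 0 := by
    have h : eval (r : k) (X * (X + C (α : k))) = ((r * (r + α) : ℤ) : k) := by simp
    rw [h, Int.cast_eq_zero, mul_eq_zero, or_comm, add_eq_zero_iff_eq_neg]
  refine ⟨α.pos, hroot, fun r hr => ?_⟩
  have h : eval (r : k) (derivative (X * (X + C (α : k)))) = ((2 * r + α : ℤ) : k) := by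
    simp only [derivative_mul, derivative_X, derivative_add, derivative_C, eval_add, eval_mul,
      eval_X, eval_C, eval_one, eval_zero]
    push_cast
    ring
  rw [h, Int.cast_ne_zero]
  have := α.pos
  rcases (hroot r).1 hr with rfl | rfl <;> lia

theorem Ici_one_union_Ioc (α : ℕ) : Set.Ici (1 : ℤ) ∪ Set.Ioc (-α) 0 = Set.Ioi (-α : ℤ) := by
  ext n
  simp only [Set.mem_union, Set.mem_Ici, Set.mem_Ioc, Set.mem_Ioi]
  lia

theorem disjoint_Ici_one_Ioc (α : ℕ) : Disjoint (Set.Ici (1 : ℤ)) (Set.Ioc (-α) 0) :=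
  Set.disjoint_left.2 fun n hn hn' => by
    rw [Set.mem_Ici] at hn
    rw [Set.mem_Ioc] at hn'
    lia

variable {k f} {α : ℕ}

namespace HasCongruentRoots

theorem isWeightInterval (hf : HasCongruentRoots k f α) {s : ℤ} {P : Set ℤ} (hs : s ∈ P)
    (hP : P.OrdConnected) (h : ∀ r, ¬(r ∈ P ↔ r + 1 ∈ P) → r = -α ∨ r = 0) :
    IsWeightInterval k f s P :=
  ⟨hs, hP, fun r hr => (hf.eval_eq_zero_iff r).2 (h r hr)⟩

theorem isWeightInterval_Iic (hf : HasCongruentRoots k f α) :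
    IsWeightInterval k f (-α) (Set.Iic (-α)) :=
  hf.isWeightInterval Set.self_mem_Iic Set.ordConnected_Iic fun r hr => by
    simp only [Set.mem_Iic] at hr
    lia

theorem isWeightInterval_Ici (hf : HasCongruentRoots k f α) :
    IsWeightInterval k f 1 (Set.Ici 1) :=
  hf.isWeightInterval Set.self_mem_Ici Set.ordConnected_Ici fun r hr => by
    simp only [Set.mem_Ici] at hr
    lia

theorem isWeightInterval_Ioc (hf : HasCongruentRoots k f α) :
    IsWeightInterval k f 0 (Set.Ioc (-α) 0) :=
  hf.isWeightInterval (by simp [hf.pos]) Set.ordConnected_Ioc fun r hr => by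
    simp only [Set.mem_Ioc] at hr
    lia

theorem isAdjacent (hf : HasCongruentRoots k f α) {s t : ℤ} {P Q : Set ℤ}
    (hP : IsWeightInterval k f s P) (hQ : IsWeightInterval k f t Q) (hdisj : Disjoint P Q)
    (hPQ : (P ∪ Q).OrdConnected) (h : ∀ r ∈ Q, r + 1 ∈ Q → r ≠ -α ∧ r ≠ 0) :
    IsAdjacent k f s P t Q :=
  ⟨hP, hQ, hdisj, hPQ, fun r hr hr' =>
    (hf.eval_eq_zero_iff r).not.2 (not_or.2 (h r hr hr'))⟩

theorem isAdjacent_Iic_Ioc (hf : HasCongruentRoots k f α) :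
    IsAdjacent k f (-α) (Set.Iic (-α)) 0 (Set.Ioc (-α) 0) := by
  refine hf.isAdjacent hf.isWeightInterval_Iic hf.isWeightInterval_Ioc
    (Set.Iic_disjoint_Ioc le_rfl) ?_ fun r hr hr' => ?_
  · rw [Set.Iic_union_Ioc_eq_Iic (by simp)]
    exact Set.ordConnected_Iic
  · rw [Set.mem_Ioc] at hr hr'
    lia

theorem isAdjacent_Ioc_Iic (hf : HasCongruentRoots k f α) :
    IsAdjacent k f 0 (Set.Ioc (-α) 0) (-α) (Set.Iic (-α)) := by
  refine hf.isAdjacent hf.isWeightInterval_Ioc hf.isWeightInterval_Iic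
    (Set.Iic_disjoint_Ioc le_rfl).symm ?_ fun r hr hr' => ?_
  · rw [Set.union_comm, Set.Iic_union_Ioc_eq_Iic (by simp)]
    exact Set.ordConnected_Iic
  · have := hf.pos
    rw [Set.mem_Iic] at hr hr'
    lia

theorem isAdjacent_Ici_Ioc (hf : HasCongruentRoots k f α) :
    IsAdjacent k f 1 (Set.Ici 1) 0 (Set.Ioc (-α) 0) := by
  refine hf.isAdjacent hf.isWeightInterval_Ici hf.isWeightInterval_Ioc
    (disjoint_Ici_one_Ioc α) ?_ fun r hr hr' => ?_
  · rw [Ici_one_union_Ioc]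
    exact Set.ordConnected_Ioi
  · rw [Set.mem_Ioc] at hr hr'
    lia

theorem isAdjacent_Ioc_Ici (hf : HasCongruentRoots k f α) :
    IsAdjacent k f 0 (Set.Ioc (-α) 0) 1 (Set.Ici 1) := by
  refine hf.isAdjacent hf.isWeightInterval_Ioc hf.isWeightInterval_Ici
    (disjoint_Ici_one_Ioc α).symm ?_ fun r hr hr' => ?_
  · rw [Set.union_comm, Ici_one_union_Ioc]
    exact Set.ordConnected_Ioi
  · rw [Set.mem_Ici] at hr hr'
    lia

theorem not_ordConnected_Iic_union_Ici (hf : HasCongruentRoots k f α) :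
    ¬(Set.Iic (-α : ℤ) ∪ Set.Ici 1).OrdConnected := fun h => by
  have h0 : (0 : ℤ) ∈ Set.Iic (-α : ℤ) ∪ Set.Ici 1 :=
    h.out (Or.inl Set.self_mem_Iic) (Or.inr Set.self_mem_Ici) ⟨by simp, zero_le_one⟩
  simp [hf.pos.ne'] at h0

theorem extVanishes_weightIdeal_self [CharZero k] (hf : HasCongruentRoots k f α) {s : ℤ} {P : Set ℤ}
    (hP : IsWeightInterval k f s P) {r : ℤ} (hr : ¬(r ∈ P ↔ r + 1 ∈ P)) :
    ExtVanishes k f (weightIdeal k f s P) s (weightIdeal k f s P) s :=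
  extVanishes_self hP hr (hf.eval_derivative_ne_zero r (hP.eval_eq_zero r hr))

end HasCongruentRoots

end CongruentRoots

theorem ext_computations_congruent_root_general (k : Type) [Field k] [CharZero k]
    {f : Polynomial k} {α : ℕ} (hf : HasCongruentRoots k f α) :
    letI A := GWA k f
    letI IX : Submodule Aᵐᵒᵖ A := Submodule.span Aᵐᵒᵖ
      {gwaX k f, gwaZ k f + algebraMap k A (α : k)}
    letI IY : Submodule Aᵐᵒᵖ A := Submodule.span Aᵐᵒᵖ {gwaY k f, gwaZ k f - 1}
    letI IZ : Submodule Aᵐᵒᵖ A := Submodule.span Aᵐᵒᵖ {gwaY k f ^ α, gwaX k f, gwaZ k f}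
    (ExtVanishes k f IY 1 IX (-(α : ℤ)) ∧ ExtVanishes k f IX (-(α : ℤ)) IY 1) ∧
    (ExtVanishes k f IX (-(α : ℤ)) IX (-(α : ℤ)) ∧
      ExtVanishes k f IY 1 IY 1 ∧ ExtVanishes k f IZ 0 IZ 0) ∧
    (ExtOneDim k f IZ 0 IX (-(α : ℤ)) ∧ ExtOneDim k f IX (-(α : ℤ)) IZ 0 ∧
      ExtOneDim k f IZ 0 IY 1 ∧ ExtOneDim k f IY 1 IZ 0) := by
  have hX : Submodule.span (GWA k f)ᵐᵒᵖ {gwaX k f, gwaZ k f + algebraMap k _ (α : k)} =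
      weightIdeal k f (-α) (Set.Iic (-α)) := by
    rw [← span_gwaX_eq_weightIdeal, map_natCast, Int.cast_neg, Int.cast_natCast, sub_neg_eq_add]
  have hY : Submodule.span (GWA k f)ᵐᵒᵖ {gwaY k f, gwaZ k f - 1} =
      weightIdeal k f 1 (Set.Ici 1) := by
    rw [← span_gwaY_eq_weightIdeal, Int.cast_one]
  have hZ : Submodule.span (GWA k f)ᵐᵒᵖ {gwaY k f ^ α, gwaX k f, gwaZ k f} =
      weightIdeal k f 0 (Set.Ioc (-α) 0) := by
    rw [← zero_sub (α : ℤ), ← span_gwaY_pow_gwaX_eq_weightIdeal, Int.cast_zero, sub_zero]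
  rw [hX, hY, hZ]
  have hXI := hf.isWeightInterval_Iic
  have hYI := hf.isWeightInterval_Ici
  have hXY := hf.not_ordConnected_Iic_union_Ici
  have hdisj : Disjoint (Set.Iic (-α : ℤ)) (Set.Ici 1) := Set.Iic_disjoint_Ici.2 (by lia)
  refine ⟨⟨?_, ?_⟩, ⟨?_, ?_, ?_⟩, hf.isAdjacent_Iic_Ioc.extOneDim, hf.isAdjacent_Ioc_Iic.extOneDim,
    hf.isAdjacent_Ici_Ioc.extOneDim, hf.isAdjacent_Ioc_Ici.extOneDim⟩
  · exact extVanishes_of_not_ordConnected_union hXI hYI hdisj hXY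
  · exact extVanishes_of_not_ordConnected_union hYI hXI hdisj.symm (Set.union_comm _ _ ▸ hXY)
  · exact hf.extVanishes_weightIdeal_self hXI (r := -α) (by simp)
  · exact hf.extVanishes_weightIdeal_self hYI (r := 0) (by simp)
  · exact hf.extVanishes_weightIdeal_self hf.isWeightInterval_Ioc (r := 0) (by simp [hf.pos])

set_option maxHeartbeats 1000000 in
/-- Let `α ∈ ℕ⁺`, `f = z(z+α)`.  With the integrally supported graded
simple modules `X = (A/(x,z+α)A)⟨−α⟩`, `Y = (A/(y,z−1)A)⟨1⟩` and `Z = A/(y^α,x,z)A`: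
`Ext¹_A(X,Y) = Ext¹_A(Y,X) = 0`; `Ext¹_A(S,S) = 0` for `S ∈ {X,Y,Z}`; and
`Ext¹_A(X,Z) = Ext¹_A(Z,X) = Ext¹_A(Y,Z) = Ext¹_A(Z,Y) = k`, concentrated in
degree `0`. -/
theorem ext_computations_congruent_root
    (k : Type) [Field k] [IsAlgClosed k] [CharZero k] (α : ℕ+) :
    letI f : Polynomial k := X * (X + C (α : k))
    letI A := GWA k f
    letI IX : Submodule Aᵐᵒᵖ A := Submodule.span Aᵐᵒᵖ
      {gwaX k f, gwaZ k f + algebraMap k A (α : k)}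
    letI IY : Submodule Aᵐᵒᵖ A := Submodule.span Aᵐᵒᵖ {gwaY k f, gwaZ k f - 1}
    letI IZ : Submodule Aᵐᵒᵖ A := Submodule.span Aᵐᵒᵖ
      {gwaY k f ^ (α : ℕ), gwaX k f, gwaZ k f}
    -- Ext¹(X,Y) = Ext¹(Y,X) = 0
    (ExtVanishes k f IY 1 IX (-(α : ℤ)) ∧ ExtVanishes k f IX (-(α : ℤ)) IY 1) ∧
    -- Ext¹(S,S) = 0 for S ∈ {X, Y, Z}
    (ExtVanishes k f IX (-(α : ℤ)) IX (-(α : ℤ)) ∧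
      ExtVanishes k f IY 1 IY 1 ∧ ExtVanishes k f IZ 0 IZ 0) ∧
    -- Ext¹(X,Z) = Ext¹(Z,X) = Ext¹(Y,Z) = Ext¹(Z,Y) = k, concentrated in degree 0
    (ExtOneDim k f IZ 0 IX (-(α : ℤ)) ∧ ExtOneDim k f IX (-(α : ℤ)) IZ 0 ∧
      ExtOneDim k f IZ 0 IY 1 ∧ ExtOneDim k f IY 1 IZ 0) := by
  exact ext_computations_congruent_root_general k (hasCongruentRoots_mul_X_add_C k α)

end
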